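/- arXiv:2106.09615 — 5 statements merged into one kernel-verified Lean document; each statement's English description precedes it below -/
import Mathlib

section
/- There exist absolute constants c > 0, K ≥ 1 and c0 > 0 such that for every prime p and every finite set A ⊆ F_p with |A| < sqrt(p), one has max{ Sid^+_K(A), Sid^×_K(A) } ≥ c0·|A|^{1/2 + c}. -/
open scoped BigOperators

/-- The number of pairs `(x, y) ∈ S × S` with `x = lam * y`. -/
noncomputable def mulPairCount {F : Type*} [Mul F] (lam : F) (S : Finset F) : ℕ :=
  Set.ncard {q : F × F | q.1 ∈ S ∧ q.2 ∈ S ∧ q.1 = lam * q.2}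

/-- `S` is multiplicatively `K`-Sidon. -/
def IsMulSidon {F : Type*} [MulOneClass F] (K : ℝ) (S : Finset F) : Prop :=
  ∀ lam : F, lam ≠ 1 → (mulPairCount lam S : ℝ) ≤ K

/-- The number of pairs `(x, y) ∈ S × S` with `x - y = mu`. -/
noncomputable def subPairCount {F : Type*} [Sub F] (mu : F) (S : Finset F) : ℕ :=
  Set.ncard {q : F × F | q.1 ∈ S ∧ q.2 ∈ S ∧ q.1 - q.2 = mu}

/-- `S` is additively `K`-Sidon. -/
def IsAddSidon {F : Type*} [SubtractionMonoid F] (K : ℝ) (S : Finset F) : Prop :=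
  ∀ mu : F, mu ≠ 0 → (subPairCount mu S : ℝ) ≤ K


namespace SidonAux
open Finset
open scoped Pointwise

/-- number of representations of `u` as a quotient of elements of `D` -/
@[to_additive]
def mulRep {G : Type*} [CommGroup G] [DecidableEq G] (D : Finset G) (u : G) : ℕ :=
  (D.filter (fun x => x / u ∈ D)).card

/-- almost periods -/
@[to_additive]
noncomputable def mulNear {G : Type*} [CommGroup G] [DecidableEq G] [Fintype G]
    (D : Finset G) (τ : ℝ) : Finset G :=
  Finset.univ.filter (fun u => τ ≤ (mulRep D u : ℝ))

section generic
variable {G : Type*} [CommGroup G] [DecidableEq G]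

@[to_additive]
lemma mulRep_le (D : Finset G) (u : G) : mulRep D u ≤ D.card := card_filter_le _ _

@[to_additive]
lemma mulRep_one (D : Finset G) : mulRep D 1 = D.card := by
  simp [mulRep]

@[to_additive]
lemma mulRep_mono {D E : Finset G} (h : D ⊆ E) (u : G) : mulRep D u ≤ mulRep E u := by
  unfold mulRep
  apply card_le_card
  intro x hx
  simp only [mem_filter] at hx ⊢
  exact ⟨h hx.1, h hx.2⟩

@[to_additive]
lemma sum_mulRep [Fintype G] (D : Finset G) : ∑ u, mulRep D u = D.card ^ 2 := by
  unfold mulRep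
  simp only [card_filter]
  rw [sum_comm]
  have : ∀ x ∈ D, ∑ u : G, (if x / u ∈ D then 1 else 0) = D.card := by
    intro x _
    rw [← card_filter]
    apply card_bij (fun u _ => x / u)
    · intro a ha; simpa using ha
    · intro a _ b _ h; simpa using h
    · intro b hb; exact ⟨x / b, by simpa using hb, by simp⟩
  rw [sum_congr rfl this]
  simp [sq]

@[to_additive]
lemma mulNear_card [Fintype G] (D : Finset G) (τ : ℝ) :
    τ * (mulNear D τ).card ≤ (D.card : ℝ) ^ 2 := by
  have h1 : τ * (mulNear D τ).card ≤ ∑ u ∈ mulNear D τ, (mulRep D u : ℝ) := by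
    rw [mul_comm, ← nsmul_eq_mul]
    apply card_nsmul_le_sum
    intro u hu
    simpa [mulNear] using hu
  have h2 : ∑ u ∈ mulNear D τ, (mulRep D u : ℝ) ≤ ∑ u, (mulRep D u : ℝ) :=
    sum_le_sum_of_subset_of_nonneg (subset_univ _) (fun _ _ _ => by positivity)
  have h3 : ∑ u, (mulRep D u : ℝ) = (D.card : ℝ) ^ 2 := by
    exact_mod_cast sum_mulRep D
  linarith

/-- dependent random choice -/
@[to_additive]
lemma mul_drc [Fintype G] (D U : Finset G) (hD : D.Nonempty) (τ τ' : ℝ) (hτ : 0 ≤ τ)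
    (hτ' : 0 ≤ τ') (s : ℕ)
    (hU : ∀ u ∈ U, τ ≤ (mulRep D u : ℝ)) (h : 2 * (U.card : ℝ) * τ' ^ s ≤ τ ^ s) :
    ∃ U' ⊆ U, (∀ x ∈ U', ∀ y ∈ U', τ' ≤ (mulRep D (x / y) : ℝ)) ∧
      (U.card : ℝ) * τ ^ s ≤ 2 * U'.card * (D.card : ℝ) ^ s := by
  classical
  set F : Finset (Fin s → G) := Fintype.piFinset (fun _ => D) with hF
  set V : (Fin s → G) → Finset G := fun f => U.filter (fun u => ∀ i, f i / u ∈ D) with hV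
  set bad : (Fin s → G) → Finset (G × G) := fun f =>
    (U ×ˢ U).filter (fun q => (mulRep D (q.1 / q.2) : ℝ) < τ' ∧
      (∀ i, f i / q.1 ∈ D) ∧ (∀ i, f i / q.2 ∈ D)) with hbad
  have hFc : (F.card : ℝ) = (D.card : ℝ) ^ s := by
    simp [hF, Fintype.card_piFinset]
  have hFne : F.Nonempty := by
    rw [hF, Fintype.piFinset_nonempty]; intro _; exact hD
  have s1 : (U.card : ℝ) * τ ^ s ≤ ∑ f ∈ F, ((V f).card : ℝ) := by
    have : ∑ f ∈ F, ((V f).card : ℝ) = ∑ u ∈ U, (mulRep D u : ℝ) ^ s := by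
      simp only [hV, card_filter, Nat.cast_sum]
      rw [sum_comm]
      apply sum_congr rfl
      intro u _
      rw [← Nat.cast_sum, ← card_filter]
      have e : F.filter (fun f => ∀ i, f i / u ∈ D)
          = Fintype.piFinset (fun _ : Fin s => D.filter (fun x => x / u ∈ D)) := by
        ext f
        simp only [hF, mem_filter, Fintype.mem_piFinset]
        exact ⟨fun h i => ⟨h.1 i, h.2 i⟩, fun h => ⟨fun i => (h i).1, fun i => (h i).2⟩⟩
      rw [e, Fintype.card_piFinset]
      simp [mulRep]
    rw [this, ← nsmul_eq_mul]
    apply card_nsmul_le_sum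
    intro u hu
    exact pow_le_pow_left₀ hτ (hU u hu) s
  have s2 : ∑ f ∈ F, ((bad f).card : ℝ) ≤ (U.card : ℝ) * U.card * τ' ^ s := by
    simp only [hbad, card_filter, Nat.cast_sum]
    rw [sum_comm]
    have : ∀ q ∈ U ×ˢ U, ∑ f ∈ F, (((if (mulRep D (q.1 / q.2) : ℝ) < τ' ∧
      (∀ i, f i / q.1 ∈ D) ∧ (∀ i, f i / q.2 ∈ D) then 1 else 0 : ℕ)) : ℝ) ≤ τ' ^ s := by
      rintro ⟨x, y⟩ _
      rw [← Nat.cast_sum, ← card_filter]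
      by_cases hb : (mulRep D (x / y) : ℝ) < τ'
      · have e : F.filter (fun f => (mulRep D (x / y) : ℝ) < τ' ∧
            (∀ i, f i / x ∈ D) ∧ (∀ i, f i / y ∈ D))
          ⊆ Fintype.piFinset (fun _ : Fin s => D.filter (fun z => z / x ∈ D ∧ z / y ∈ D)) := by
          intro f
          simp only [hF, mem_filter, Fintype.mem_piFinset]
          exact fun h i => ⟨h.1 i, h.2.2.1 i, h.2.2.2 i⟩
        have e2 := card_le_card e
        rw [Fintype.card_piFinset] at e2
        simp only [prod_const, card_univ, Fintype.card_fin] at e2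
        have e3 : (D.filter (fun z => z / x ∈ D ∧ z / y ∈ D)).card ≤ mulRep D (x / y) := by
          unfold mulRep
          apply card_le_card_of_injOn (fun z => z / y)
          · intro z hz
            simp only [coe_filter, Set.mem_ofPred_eq] at hz ⊢
            refine ⟨hz.2.2, ?_⟩
            rw [div_div_div_cancel_right]; exact hz.2.1
          · intro a _ b _ h
            simpa using h
        calc (((F.filter (fun f => (mulRep D (x / y) : ℝ) < τ' ∧
            (∀ i, f i / x ∈ D) ∧ (∀ i, f i / y ∈ D))).card : ℕ) : ℝ)
            ≤ ((D.filter (fun z => z / x ∈ D ∧ z / y ∈ D)).card : ℝ) ^ s := by exact_mod_cast e2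
          _ ≤ τ' ^ s := by
            apply pow_le_pow_left₀ (by positivity)
            exact le_trans (by exact_mod_cast e3) hb.le
      · have : F.filter (fun f => (mulRep D (x / y) : ℝ) < τ' ∧
            (∀ i, f i / x ∈ D) ∧ (∀ i, f i / y ∈ D)) = ∅ := by
          apply filter_eq_empty_iff.2
          intro f _ h
          exact hb h.1
        rw [this]; simp; positivity
    refine (sum_le_card_nsmul _ _ _ this).trans ?_
    rw [card_product, nsmul_eq_mul]; push_cast; exact le_rfl
  obtain ⟨f, hf, hle⟩ : ∃ f ∈ F, (U.card : ℝ) * τ ^ s / 2 / (D.card : ℝ) ^ s ≤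
      ((V f).card : ℝ) - (bad f).card := by
    apply exists_le_of_sum_le hFne
    rw [sum_const, nsmul_eq_mul, hFc, sum_sub_distrib]
    have : (0:ℝ) < (D.card : ℝ) ^ s := by
      have := hD.card_pos
      positivity
    rw [mul_div_cancel₀ _ this.ne']
    have : (U.card : ℝ) * U.card * τ' ^ s ≤ (U.card : ℝ) * τ ^ s / 2 := by
      have := mul_le_mul_of_nonneg_left h (Nat.cast_nonneg (α := ℝ) U.card)
      linarith
    linarith
  refine ⟨V f \ (bad f).image Prod.fst, ?_, ?_, ?_⟩
  · exact sdiff_subset.trans (filter_subset _ _)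
  · intro x hx y hy
    by_contra hlt
    push Not at hlt
    rw [mem_sdiff] at hx hy
    apply hx.2
    rw [mem_image]
    refine ⟨(x, y), ?_, rfl⟩
    have hx1 := mem_filter.1 hx.1
    have hy1 := mem_filter.1 hy.1
    simp only [hbad, mem_filter, mem_product]
    exact ⟨⟨hx1.1, hy1.1⟩, hlt, hx1.2, hy1.2⟩
  · have c1 : ((V f).card : ℝ) - (bad f).card ≤ (V f \ (bad f).image Prod.fst).card := by
      have h1 := le_card_sdiff ((bad f).image Prod.fst) (V f)
      have h2 : ((bad f).image Prod.fst).card ≤ (bad f).card := card_image_le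
      have : (V f).card ≤ (V f \ (bad f).image Prod.fst).card + (bad f).card := by omega
      have : ((V f).card : ℝ) ≤ (V f \ (bad f).image Prod.fst).card + (bad f).card := by
        exact_mod_cast this
      linarith
    have hpos : (0:ℝ) < (D.card : ℝ) ^ s := by
      have := hD.card_pos
      positivity
    have := hle.trans c1
    rw [div_le_iff₀ hpos] at this
    linarith

end generic

/-- deletion method for hypergraphs -/
lemma hypergraph_indep {V ι : Type*} [Fintype V] [Nonempty V] [DecidableEq V] [DecidableEq ι]
    (A : Finset V) (E : Finset ι) (T : ι → Finset V) (t : ℕ) (ht : 1 ≤ t)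
    (hT : ∀ i ∈ E, (T i).card = t) (m : ℕ) :
    ∃ S ⊆ A, (∀ i ∈ E, ¬ T i ⊆ S) ∧
      (A.card : ℝ) / (m + 1 : ℝ) - (E.card : ℝ) / (m + 1 : ℝ) ^ t ≤ S.card := by
  classical
  set F : Finset (V → Fin (m + 1)) := Finset.univ with hF
  have hcount : ∀ S : Finset V, ((F.filter (fun f => ∀ v ∈ S, f v = 0)).card : ℝ)
      = (F.card : ℝ) / (m + 1 : ℝ) ^ S.card := by
    intro S
    have e : F.filter (fun f => ∀ v ∈ S, f v = 0) =
        Fintype.piFinset (fun v => if v ∈ S then {(0 : Fin (m+1))} else Finset.univ) := by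
      ext f
      simp only [hF, mem_filter, mem_univ, true_and, Fintype.mem_piFinset]
      apply forall_congr'
      intro v
      by_cases hv : v ∈ S <;> simp [hv]
    rw [e, Fintype.card_piFinset]
    have e2 : ∀ v, (if v ∈ S then {(0 : Fin (m+1))} else Finset.univ).card
        = if v ∈ S then 1 else (m + 1) := by
      intro v; by_cases hv : v ∈ S <;> simp [hv]
    simp only [e2]
    rw [prod_ite]
    have hFc : (F.card : ℝ) = (m + 1 : ℝ) ^ (Fintype.card V) := by
      simp [hF]
    rw [hFc]
    have h3 : (Finset.univ.filter (fun x => x ∉ S)).card = Fintype.card V - S.card := by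
      rw [← card_compl]; congr 1; ext; simp
    simp only [prod_const, one_pow, one_mul, h3]
    rw [eq_div_iff (by positivity)]
    push_cast
    rw [← pow_add, Nat.sub_add_cancel (card_le_univ S)]
  have hFne : F.Nonempty := ⟨fun _ => 0, by simp [hF]⟩
  set W : (V → Fin (m + 1)) → Finset V := fun f => A.filter (fun a => f a = 0) with hW
  set bad : (V → Fin (m + 1)) → Finset ι := fun f => E.filter (fun i => ∀ v ∈ T i, f v = 0) with hbad
  have s1 : ∑ f ∈ F, ((W f).card : ℝ) = A.card * ((F.card : ℝ) / (m + 1 : ℝ)) := by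
    simp only [hW, card_filter, Nat.cast_sum]
    rw [sum_comm, ← nsmul_eq_mul, ← sum_const]
    apply sum_congr rfl
    intro a _
    rw [← Nat.cast_sum, ← card_filter]
    have := hcount {a}
    simpa using this
  have s2 : ∑ f ∈ F, ((bad f).card : ℝ) = E.card * ((F.card : ℝ) / (m + 1 : ℝ) ^ t) := by
    simp only [hbad, card_filter, Nat.cast_sum]
    rw [sum_comm, ← nsmul_eq_mul, ← sum_const]
    apply sum_congr rfl
    intro i hi
    rw [← Nat.cast_sum, ← card_filter, hcount, hT i hi]
  obtain ⟨f, hf, hle⟩ : ∃ f ∈ F, (A.card : ℝ) / (m + 1 : ℝ) - (E.card : ℝ) / (m + 1 : ℝ) ^ t ≤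
      ((W f).card : ℝ) - (bad f).card := by
    apply exists_le_of_sum_le hFne
    rw [sum_const, nsmul_eq_mul, sum_sub_distrib, s1, s2]
    apply le_of_eq; ring
  have hne : ∀ i ∈ E, ∃ v, v ∈ T i := by
    intro i hi
    have : (T i).Nonempty := by rw [← card_pos, hT i hi]; omega
    exact this
  choose! g hg using hne
  refine ⟨W f \ (bad f).image g, sdiff_subset.trans (filter_subset _ _), ?_, ?_⟩
  · intro i hi hsub
    have hb : i ∈ bad f := by
      simp only [hbad, mem_filter]
      refine ⟨hi, fun v hv => ?_⟩
      have := mem_sdiff.1 (hsub hv)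
      exact (mem_filter.1 this.1).2
    have := mem_sdiff.1 (hsub (hg i hi))
    exact this.2 (mem_image_of_mem _ hb)
  · have h1 := le_card_sdiff ((bad f).image g) (W f)
    have h2 : ((bad f).image g).card ≤ (bad f).card := card_image_le
    have : (W f).card ≤ (W f \ (bad f).image g).card + (bad f).card := by omega
    have : ((W f).card : ℝ) ≤ (W f \ (bad f).image g).card + (bad f).card := by
      exact_mod_cast this
    linarith

section generic2
variable {G : Type*} [CommGroup G] [DecidableEq G]

@[to_additive]
lemma exists_disjoint_div (R : Finset G) (u : G) (hu : u ≠ 1) :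
    ∃ B ⊆ R, R.card ≤ 3 * B.card ∧ Disjoint B (B.image (fun x => x / u)) := by
  classical
  obtain ⟨B, hB, hmax⟩ := exists_max_image
    (R.powerset.filter (fun B => Disjoint B (B.image (fun x => x / u)))) card
    ⟨∅, by simp⟩
  simp only [mem_filter, mem_powerset] at hB hmax
  refine ⟨B, hB.1, ?_, hB.2⟩
  have hcov : R ⊆ B ∪ B.image (fun x => x / u) ∪ B.image (fun x => x * u) := by
    intro a ha
    by_contra hn
    simp only [mem_union, not_or] at hn
    obtain ⟨⟨hn1, hn2⟩, hn3⟩ := hn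
    have := hmax (insert a B) ⟨insert_subset ha hB.1, ?_⟩
    · rw [card_insert_of_notMem hn1] at this; omega
    · rw [image_insert, disjoint_insert_left, disjoint_insert_right]
      refine ⟨?_, ?_, hB.2⟩
      · rw [mem_insert, not_or]
        refine ⟨?_, hn2⟩
        intro h
        apply hu
        simpa using h.symm
      · intro h
        apply hn3
        rw [mem_image]
        exact ⟨a / u, h, by simp⟩
  have h1 := card_le_card hcov
  have h2 := card_union_le (B ∪ B.image (fun x => x / u)) (B.image (fun x => x * u))
  have h3 := card_union_le B (B.image (fun x => x / u))
  have h4 : (B.image (fun x => x / u)).card ≤ B.card := card_image_le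
  have h5 : (B.image (fun x => x * u)).card ≤ B.card := card_image_le
  omega

@[to_additive]
lemma mul_sidon_raw [Fintype G] (A : Finset G) (k : ℕ) (hk : 1 ≤ k) (τ : ℝ) (hτ : 0 ≤ τ) (m : ℕ) :
    ∃ S ⊆ A, (∀ u, u ≠ 1 → mulRep S u ≤ 3 * k) ∧
      (A.card : ℝ) / (m + 1 : ℝ) -
        ((mulNear A τ).card * (A.card : ℝ) ^ k + (A.card : ℝ) ^ 2 * τ ^ (k - 1)) / (m + 1 : ℝ) ^ (2 * k)
        ≤ S.card := by
  classical
  set E : Finset (Σ _ : G, Finset G) :=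
    ((Finset.univ : Finset G).sigma
      (fun u => powersetCard k (A.filter (fun x => x / u ∈ A)))).filter
      (fun q => Disjoint q.2 (q.2.image (fun x => x / q.1))) with hE
  have hT : ∀ i ∈ E, (i.2 ∪ i.2.image (fun x => x / i.1)).card = 2 * k := by
    intro i hi
    simp only [hE, mem_filter, mem_sigma, mem_powersetCard] at hi
    rw [card_union_of_disjoint hi.2, card_image_of_injective _ (div_left_injective), hi.1.2.2]
    omega
  have hEc : (E.card : ℝ) ≤
      (mulNear A τ).card * (A.card : ℝ) ^ k + (A.card : ℝ) ^ 2 * τ ^ (k - 1) := by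
    have h1 : E.card ≤ ∑ u : G, (mulRep A u) ^ k := by
      refine (card_filter_le _ _).trans ?_
      rw [card_sigma]
      apply sum_le_sum
      intro u _
      rw [card_powersetCard]
      exact Nat.choose_le_pow _ _
    have h2 : (E.card : ℝ) ≤ ∑ u : G, (mulRep A u : ℝ) ^ k := by exact_mod_cast h1
    refine h2.trans ?_
    rw [← sum_filter_add_sum_filter_not Finset.univ (fun u => τ ≤ (mulRep A u : ℝ))]
    apply add_le_add
    · change ∑ u ∈ mulNear A τ, _ ≤ _
      rw [← nsmul_eq_mul]
      apply sum_le_card_nsmul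
      intro u _
      apply pow_le_pow_left₀ (by positivity)
      exact_mod_cast mulRep_le A u
    · have h3 : ∀ u ∈ Finset.univ.filter (fun u => ¬ τ ≤ (mulRep A u : ℝ)),
          (mulRep A u : ℝ) ^ k ≤ (mulRep A u : ℝ) * τ ^ (k - 1) := by
        intro u hu
        have hu' : (mulRep A u : ℝ) < τ := by simpa using hu
        obtain ⟨l, rfl⟩ : ∃ l, k = l + 1 := ⟨k - 1, by omega⟩
        rw [pow_succ, mul_comm]
        simp only [Nat.add_sub_cancel]
        apply mul_le_mul_of_nonneg_left _ (by positivity)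
        exact pow_le_pow_left₀ (by positivity) hu'.le _
      refine (sum_le_sum h3).trans ?_
      rw [← sum_mul]
      apply mul_le_mul_of_nonneg_right _ (by positivity)
      have h4 : ∑ u, (mulRep A u : ℝ) = (A.card : ℝ) ^ 2 := by
        exact_mod_cast sum_mulRep A
      rw [← h4]
      exact sum_le_sum_of_subset_of_nonneg (subset_univ _) (fun _ _ _ => by positivity)
  obtain ⟨S, hSA, hS, hSc⟩ := hypergraph_indep A E
    (fun i => i.2 ∪ i.2.image (fun x => x / i.1)) (2 * k) (by omega) hT m
  refine ⟨S, hSA, ?_, ?_⟩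
  · intro u hu
    by_contra hlt
    push Not at hlt
    obtain ⟨B, hBR, hBc, hBd⟩ := exists_disjoint_div (S.filter (fun x => x / u ∈ S)) u hu
    have hBk : k ≤ B.card := by
      unfold mulRep at hlt
      omega
    obtain ⟨B', hB'B, hB'c⟩ := exists_subset_card_eq hBk
    have hd : Disjoint B' (B'.image (fun x => x / u)) :=
      disjoint_of_subset_left hB'B (disjoint_of_subset_right (image_subset_image hB'B) hBd)
    have hsub : B' ⊆ S.filter (fun x => x / u ∈ S) := hB'B.trans hBR
    apply hS ⟨u, B'⟩
    · simp only [hE, mem_filter, mem_sigma, mem_powersetCard, mem_univ, true_and]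
      refine ⟨⟨?_, hB'c⟩, hd⟩
      intro x hx
      have := mem_filter.1 (hsub hx)
      exact mem_filter.2 ⟨hSA this.1, hSA this.2⟩
    · intro x hx
      simp only [mem_union, mem_image] at hx
      rcases hx with hx | ⟨y, hy, rfl⟩
      · exact (mem_filter.1 (hsub hx)).1
      · exact (mem_filter.1 (hsub hy)).2
  · refine le_trans ?_ hSc
    gcongr

end generic2
end SidonAux

namespace SidonAux
open Finset
open scoped Pointwise

@[to_additive]
lemma mul_sidon_final {G : Type*} [CommGroup G] [DecidableEq G] [Fintype G]
    (d : ℝ) (k : ℕ) (hk : 1 ≤ k) (hdk : 1 ≤ d * (k - 1)) (n : ℝ) (hn : 1 ≤ n) (A : Finset G)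
    (hA1 : n ^ (1 - 1 / (10 * (4 * k - 1)) : ℝ) ≤ A.card) (hA2 : (A.card : ℝ) ≤ n)
    (hP : ((mulNear A (n ^ (1 - d))).card : ℝ) ≤ n ^ (2 / 5 : ℝ)) :
    ∃ S ⊆ A, (∀ u, u ≠ 1 → mulRep S u ≤ 3 * k) ∧
      n ^ (1 / 2 + 1 / (10 * (4 * k - 1)) : ℝ) / 10 ≤ S.card := by
  have hn0 : 0 < n := by linarith
  have hkR : (1:ℝ) ≤ k := by exact_mod_cast hk
  set c : ℝ := 1 / (10 * (4 * k - 1)) with hc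
  have hcpos : 0 < c := by rw [hc]; apply one_div_pos.2; nlinarith
  have hck : c * (10 * (4 * k - 1)) = 1 := by
    rw [hc]; apply one_div_mul_cancel; nlinarith
  set μ : ℝ := (k - 3 / 5 + c) / (2 * k - 1) with hμ
  have h2k : (0:ℝ) < 2 * k - 1 := by linarith
  have hμk : μ * (2 * k - 1) = k - 3 / 5 + c := by
    rw [hμ]; exact div_mul_cancel₀ _ h2k.ne'
  have hexp : 1 - c - μ = 1 / 2 + c := by
    have : (1 / 2 - μ - 2 * c) * (2 * k - 1) = 0 := by
      have : (1 / 2 - μ - 2 * c) * (2 * k - 1) = (k - 1/2) - μ * (2 * k - 1) - 2 * c * (2*k-1) := by ring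
      rw [this, hμk]; linarith
    rcases mul_eq_zero.1 this with h | h <;> linarith
  have hμ0 : 0 ≤ μ := by
    rw [hμ]; apply div_nonneg <;> linarith
  have hnμ : 1 ≤ n ^ μ := Real.one_le_rpow hn hμ0
  set m : ℕ := ⌊4 * n ^ μ⌋₊ with hm
  have hm1 : 4 * n ^ μ ≤ (m + 1 : ℝ) := (Nat.lt_floor_add_one _).le
  have hm2 : (m + 1 : ℝ) ≤ 5 * n ^ μ := by
    have : (m : ℝ) ≤ 4 * n ^ μ := Nat.floor_le (by linarith)
    linarith
  obtain ⟨S, hSA, hS, hSc⟩ := mul_sidon_raw A k hk (n ^ (1 - d)) (by positivity) m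
  refine ⟨S, hSA, hS, ?_⟩
  refine le_trans ?_ hSc
  set M : ℝ := m + 1 with hM
  have hM0 : 0 < M := by linarith
  have hA0 : (0:ℝ) ≤ A.card := Nat.cast_nonneg _
  -- bound on the edges
  have he : ((mulNear A (n ^ (1 - d))).card * (A.card : ℝ) ^ k
      + (A.card : ℝ) ^ 2 * (n ^ (1 - d)) ^ (k - 1)) ≤ 2 * n ^ (k + 2 / 5 : ℝ) := by
    have e1 : ((mulNear A (n ^ (1 - d))).card * (A.card : ℝ) ^ k) ≤ n ^ (k + 2 / 5 : ℝ) := by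
      rw [add_comm (k:ℝ), Real.rpow_add hn0, Real.rpow_natCast]
      gcongr
    have e2 : (A.card : ℝ) ^ 2 * (n ^ (1 - d)) ^ (k - 1) ≤ n ^ (k + 2 / 5 : ℝ) := by
      have : (A.card : ℝ) ^ 2 ≤ n ^ (2:ℝ) := by
        rw [Real.rpow_ofNat]
        gcongr
      calc (A.card : ℝ) ^ 2 * (n ^ (1 - d)) ^ (k - 1) ≤ n ^ (2:ℝ) * (n ^ (1 - d)) ^ (k - 1) := by gcongr
        _ = n ^ (2 + (1 - d) * ((k - 1 : ℕ) : ℝ)) := by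
          rw [Real.rpow_add hn0, Real.rpow_mul hn0.le, Real.rpow_natCast]
        _ ≤ n ^ (k + 2 / 5 : ℝ) := by
          apply Real.rpow_le_rpow_of_exponent_le hn
          rw [Nat.cast_sub hk]; push_cast; nlinarith
    linarith
  have hMpow : 4 * n ^ (k - 3 / 5 + c) ≤ M ^ (2 * k - 1) := by
    have : (4 * n ^ μ) ^ (2 * k - 1) ≤ M ^ (2 * k - 1) := by gcongr
    refine le_trans ?_ this
    rw [mul_pow]
    have h4 : (4:ℝ) ≤ 4 ^ (2 * k - 1) := by
      calc (4:ℝ) = 4 ^ 1 := by norm_num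
        _ ≤ 4 ^ (2 * k - 1) := by
          apply pow_le_pow_right₀ (by norm_num); omega
    have h5 : (n ^ μ) ^ (2 * k - 1) = n ^ (k - 3 / 5 + c) := by
      rw [← Real.rpow_natCast, ← Real.rpow_mul hn0.le, Nat.cast_sub (by omega)]
      push_cast
      rw [hμk]
    rw [h5]
    gcongr
  have h6 : 2 * n ^ (k + 2 / 5 : ℝ) / M ^ (2 * k) ≤ n ^ (1 - c) / (2 * M) := by
    rw [div_le_div_iff₀ (by positivity) (by positivity)]
    obtain ⟨l, hl⟩ : ∃ l, 2 * k = l + 1 := ⟨2 * k - 1, by omega⟩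
    have hl' : 2 * k - 1 = l := by omega
    rw [hl'] at hMpow
    rw [hl, pow_succ]
    have : n ^ (k + 2 / 5 : ℝ) = n ^ (1 - c) * n ^ (k - 3 / 5 + c) := by
      rw [← Real.rpow_add hn0]; congr 1; ring
    rw [this]
    have h7 : 0 < n ^ (1 - c) := by positivity
    have := mul_le_mul_of_nonneg_left hMpow (mul_pos h7 hM0).le
    nlinarith
  have h8 : n ^ (1 / 2 + c) / 10 ≤ n ^ (1 - c) / (2 * M) := by
    rw [← hexp, Real.rpow_sub hn0, div_div]
    apply div_le_div_of_nonneg_left (by positivity) (by positivity)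
    linarith
  calc n ^ (1 / 2 + c) / 10 ≤ n ^ (1 - c) / (2 * M) := h8
    _ = n ^ (1 - c) / M - n ^ (1 - c) / (2 * M) := by field_simp; ring
    _ ≤ (A.card : ℝ) / M - 2 * n ^ (k + 2 / 5 : ℝ) / M ^ (2 * k) := by
        apply sub_le_sub _ h6; gcongr
    _ ≤ _ := by
        apply sub_le_sub le_rfl; gcongr

/-- the chain lemma -/
@[to_additive]
lemma mul_chain {G : Type*} [CommGroup G] [DecidableEq G] [Fintype G]
    (η : ℝ) (hη : 0 < η) (hη1 : η ≤ 1 / 100) (J : ℕ) (hJ : 2 ≤ J * η) (δ : ℕ → ℝ)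
    (hδ0 : ∀ j, 0 < δ j) (hδ : ∀ j < J, 14 * δ j = η * δ (j + 1)) (hδη : ∀ j ≤ J, δ j ≤ η)
    (hδmono : ∀ j ≤ J, δ 0 ≤ δ j)
    (n : ℝ) (hn : 2 ≤ n) (D : ℕ → Finset G) (hD : ∀ j, D j ⊆ D (j + 1))
    (hDc : ∀ j ≤ J, ((D j).card : ℝ) ≤ n ^ (1 + δ 0)) (hD0 : n ^ (1 - δ 0) ≤ ((D 0).card : ℝ)) :
    ∃ j < J, ∃ U' ⊆ mulNear (D j) (n ^ (1 - δ j)),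
      (∀ x ∈ U', ∀ y ∈ U', x / y ∈ mulNear (D (j + 1)) (n ^ (1 - δ (j + 1)))) ∧
      ((mulNear (D (j + 1)) (n ^ (1 - δ (j + 1)))).card : ℝ) ≤
        n ^ η * (mulNear (D j) (n ^ (1 - δ j))).card ∧
      ((mulNear (D j) (n ^ (1 - δ j))).card : ℝ) ≤ 2 * n ^ η * U'.card := by
  have hn0 : 0 < n := by linarith
  have hn1 : 1 ≤ n := by linarith
  set U : ℕ → Finset G := fun j => mulNear (D j) (n ^ (1 - δ j)) with hU
  have hUc : ∀ j ≤ J, ((U j).card : ℝ) ≤ n ^ (1 + 3 * η) := by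
    intro j hj
    have h1 := mulNear_card (D j) (n ^ (1 - δ j))
    have h2 : ((D j).card : ℝ) ^ 2 ≤ n ^ (2 * (1 + δ 0)) := by
      rw [mul_comm, Real.rpow_mul hn0.le, Real.rpow_ofNat]
      gcongr
      exact hDc j hj
    have h3 : n ^ (1 - δ j) * ((U j).card : ℝ) ≤ n ^ (1 - δ j) * n ^ (1 + 3 * η) := by
      refine (h1.trans h2).trans ?_
      rw [← Real.rpow_add hn0]
      apply Real.rpow_le_rpow_of_exponent_le hn1
      have := hδη j hj
      have := hδη 0 (by omega)
      linarith
    exact le_of_mul_le_mul_left h3 (by positivity)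
  -- pigeonhole
  obtain ⟨j, hj, hjle⟩ : ∃ j < J, ((U (j + 1)).card : ℝ) ≤ n ^ η * (U j).card := by
    by_contra hcon
    push Not at hcon
    have hU0 : (1:ℝ) ≤ (U 0).card := by
      have : (1 : G) ∈ U 0 := by
        simp only [hU, mulNear, mem_filter, mem_univ, true_and, mulRep_one]
        exact hD0
      exact_mod_cast card_pos.2 ⟨_, this⟩
    have hJ0 : J ≠ 0 := by
      rintro rfl
      norm_num at hJ
    have key : ∀ j ≤ J, n ^ (η * j) ≤ (U j).card := by
      intro j
      induction j with
      | zero => intro _; simpa using hU0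
      | succ i ih =>
        intro hi
        have h1 := ih (by omega)
        have h2 := hcon i (by omega)
        have : n ^ (η * ((i + 1 : ℕ) : ℝ)) = n ^ η * n ^ (η * i) := by
          rw [← Real.rpow_add hn0]; congr 1; push_cast; ring
        rw [this]
        refine le_trans ?_ h2.le
        gcongr
    have h1 := (key J le_rfl).trans (hUc J le_rfl)
    have h2 : n ^ (1 + 3 * η) < n ^ (η * J) := by
      apply Real.rpow_lt_rpow_of_exponent_lt (by linarith)
      linarith
    linarith
  have hDmono : D 0 ⊆ D j := by
    have : ∀ i, D 0 ⊆ D i := by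
      intro i
      induction i with
      | zero => exact Subset.rfl
      | succ i ih => exact ih.trans (hD i)
    exact this j
  have hDne : (D j).Nonempty := by
    have : (0:ℝ) < (D 0).card := lt_of_lt_of_le (by positivity) hD0
    have : 0 < (D 0).card := by exact_mod_cast this
    exact (card_pos.1 this).mono hDmono
  set s : ℕ := ⌈6 / δ (j + 1)⌉₊ with hs
  have hd1 := hδ0 (j + 1)
  have hs1 : 6 ≤ δ (j + 1) * s := by
    have : 6 / δ (j + 1) ≤ s := Nat.le_ceil _
    rw [div_le_iff₀ hd1] at this
    linarith
  have hs2 : δ (j + 1) * s ≤ 7 := by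
    have : (s : ℝ) < 6 / δ (j + 1) + 1 := Nat.ceil_lt_add_one (by positivity)
    have h2 := hδη (j + 1) (by omega)
    have h3 : δ (j + 1) * s ≤ δ (j + 1) * (6 / δ (j + 1) + 1) := by gcongr
    rw [mul_add, mul_div_cancel₀ _ hd1.ne'] at h3
    linarith
  have hjj := hδ j hj
  have hlej : δ j ≤ δ (j + 1) / 2 := by nlinarith
  obtain ⟨U', hU'U, hU'1, hU'2⟩ := mul_drc (D j) (U j) hDne (n ^ (1 - δ j)) (n ^ (1 - δ (j + 1)))
    (by positivity) (by positivity) s (by intro u hu; simpa [hU, mulNear] using hu) (by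
      have e1 : (n ^ (1 - δ j)) ^ s = (n ^ (1 - δ (j+1))) ^ s * n ^ ((δ (j + 1) - δ j) * s) := by
        rw [← Real.rpow_natCast, ← Real.rpow_mul hn0.le, ← Real.rpow_natCast, ← Real.rpow_mul hn0.le,
          ← Real.rpow_add hn0]
        congr 1; ring
      rw [e1, mul_comm]
      apply mul_le_mul_of_nonneg_left _ (by positivity)
      calc 2 * ((U j).card : ℝ) ≤ n ^ (1:ℝ) * n ^ (1 + 3 * η) := by
            rw [Real.rpow_one]
            gcongr
            exact hUc j hj.le
        _ = n ^ (2 + 3 * η) := by rw [← Real.rpow_add hn0]; congr 1; ring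
        _ ≤ n ^ ((δ (j + 1) - δ j) * s) := by
          apply Real.rpow_le_rpow_of_exponent_le hn1
          have : (0:ℝ) ≤ s := Nat.cast_nonneg _
          nlinarith)
  refine ⟨j, hj, U', hU'U, ?_, hjle, ?_⟩
  · intro x hx y hy
    simp only [mulNear, mem_filter, mem_univ, true_and]
    refine (hU'1 x hx y hy).trans ?_
    exact_mod_cast mulRep_mono (hD j) _
  · have e1 : (0:ℝ) < (n ^ (1 - δ j)) ^ s := by positivity
    have e2 : ((D j).card : ℝ) ^ s ≤ (n ^ (1 - δ j)) ^ s * n ^ η := by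
      calc ((D j).card : ℝ) ^ s ≤ (n ^ (1 + δ 0)) ^ s := by
            gcongr
            exact hDc j hj.le
        _ = (n ^ (1 - δ j)) ^ s * n ^ ((δ 0 + δ j) * s) := by
          rw [← Real.rpow_natCast, ← Real.rpow_mul hn0.le, ← Real.rpow_natCast, ← Real.rpow_mul hn0.le,
          ← Real.rpow_add hn0]
          congr 1; ring
        _ ≤ _ := by
          apply mul_le_mul_of_nonneg_left _ (by positivity)
          apply Real.rpow_le_rpow_of_exponent_le hn1
          have h1 := hδmono j hj.le
          have h2 : (0:ℝ) ≤ s := Nat.cast_nonneg _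
          calc (δ 0 + δ j) * s ≤ (2 * δ j) * s := by gcongr; linarith
            _ = η * (δ (j + 1) * s) / 7 := by
              have : δ j = η * δ (j + 1) / 14 := by linarith
              rw [this]; ring
            _ ≤ η := by nlinarith
    have e3 : (n ^ (1 - δ j)) ^ s * ((U j).card : ℝ) ≤ (n ^ (1 - δ j)) ^ s * (2 * n ^ η * U'.card) := by
      calc (n ^ (1 - δ j)) ^ s * ((U j).card : ℝ) = (U j).card * (n ^ (1 - δ j)) ^ s := mul_comm _ _
        _ ≤ 2 * U'.card * ((D j).card : ℝ) ^ s := hU'2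
        _ ≤ 2 * U'.card * ((n ^ (1 - δ j)) ^ s * n ^ η) := by gcongr
        _ = _ := by ring
    exact le_of_mul_le_mul_left e3 e1

end SidonAux

namespace SidonAux
open Finset
open scoped Pointwise

lemma stageM {G : Type*} [CommGroup G] [DecidableEq G] [Fintype G]
    (η : ℝ) (hη : 0 < η) (hη1 : η ≤ 1 / 100) (J : ℕ) (hJ : 2 ≤ J * η) (δ : ℕ → ℝ)
    (hδ0 : ∀ j, 0 < δ j) (hδ : ∀ j < J, 14 * δ j = η * δ (j + 1)) (hδη : ∀ j ≤ J, δ j ≤ η)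
    (hδmono : ∀ j ≤ J, δ 0 ≤ δ j)
    (n : ℝ) (hn : 2 ≤ n) (hn2 : 2 ≤ n ^ η) (A : Finset G) (hA : (A.card : ℝ) = n) :
    ∃ A1 ⊆ A, ∃ Γ : Finset G, 1 ∈ Γ ∧ n ^ (1 - 2 * η) ≤ A1.card ∧
      ((mulNear A (n ^ (1 - δ 0))).card : ℝ) ≤ n ^ (2 * η) * Γ.card ∧
      ∀ i : ℕ, ((A1 * Γ ^ i).card : ℝ) ≤ n ^ (1 + 2 * η + 3 * η * (2 * i + 1)) := by
  classical
  have hn0 : 0 < n := by linarith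
  have hn1 : 1 ≤ n := by linarith
  obtain ⟨j, hj, L, hL1, hL2, hL3, hL4⟩ := mul_chain η hη hη1 J hJ δ hδ0 hδ hδη hδmono n hn
    (fun _ => A) (fun _ => Subset.rfl)
    (by
      intro j _
      rw [hA]
      calc n = n ^ (1:ℝ) := (Real.rpow_one n).symm
        _ ≤ _ := Real.rpow_le_rpow_of_exponent_le hn1 (by linarith [hδ0 0]))
    (by
      rw [hA]
      calc n ^ (1 - δ 0) ≤ n ^ (1:ℝ) := Real.rpow_le_rpow_of_exponent_le hn1 (by linarith [hδ0 0])
        _ = n := Real.rpow_one n)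
  set U := mulNear A (n ^ (1 - δ j)) with hU
  have hη2 : n ^ (2 * η) = n ^ η * n ^ η := by rw [← Real.rpow_add hn0]; congr 1; ring
  have hη3 : n ^ (3 * η) = n ^ η * n ^ η * n ^ η := by
    rw [← Real.rpow_add hn0, ← Real.rpow_add hn0]; congr 1; ring
  have hηpos : 0 < n ^ η := by positivity
  have hδj := hδη j hj.le
  have hδj0 := hδ0 j
  -- U contains near-periods
  have hU0 : ((mulNear A (n ^ (1 - δ 0))).card : ℝ) ≤ U.card := by
    have : mulNear A (n ^ (1 - δ 0)) ⊆ U := by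
      intro u hu
      simp only [hU, mulNear, mem_filter, mem_univ, true_and] at hu ⊢
      refine le_trans ?_ hu
      apply Real.rpow_le_rpow_of_exponent_le hn1
      linarith [hδmono j hj.le]
    exact_mod_cast card_le_card this
  have h1U : (1 : G) ∈ U := by
    simp only [hU, mulNear, mem_filter, mem_univ, true_and, mulRep_one, hA]
    calc n ^ (1 - δ j) ≤ n ^ (1:ℝ) := Real.rpow_le_rpow_of_exponent_le hn1 (by linarith)
        _ = n := Real.rpow_one n
  have hUpos : (0:ℝ) < U.card := by exact_mod_cast card_pos.2 ⟨_, h1U⟩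
  have hUL : (U.card : ℝ) ≤ n ^ (2 * η) * L.card := by
    rw [hη2]
    refine hL4.trans ?_
    gcongr
  have hLpos : (0:ℝ) < L.card := by
    by_contra h
    have : (L.card : ℝ) = 0 := le_antisymm (not_lt.1 h) (Nat.cast_nonneg _)
    rw [this] at hUL
    linarith
  have hLne : L.Nonempty := card_pos.1 (by exact_mod_cast hLpos)
  have hLL : ((L / L).card : ℝ) ≤ n ^ (3 * η) * L.card := by
    have h1 : L / L ⊆ mulNear A (n ^ (1 - δ (j + 1))) := by
      intro z hz
      obtain ⟨x, hx, y, hy, rfl⟩ := mem_div.1 hz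
      exact hL2 x hx y hy
    have h2 : ((L / L).card : ℝ) ≤ (mulNear A (n ^ (1 - δ (j + 1)))).card := by
      exact_mod_cast card_le_card h1
    calc ((L / L).card : ℝ) ≤ n ^ η * U.card := h2.trans hL3
      _ ≤ n ^ η * (n ^ (2 * η) * L.card) := by gcongr
      _ = n ^ (3 * η) * L.card := by rw [hη2, hη3]; ring
  have hplu : ∀ i : ℕ, ((L ^ (i + 1) / L ^ i).card : ℝ) ≤ n ^ (3 * η * (2 * i + 1)) * L.card := by
    intro i
    have h := pluennecke_ruzsa_inequality_pow_div_pow_div hLne L (i + 1) i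
    have h' : ((L ^ (i + 1) / L ^ i).card : ℝ) ≤
        (((L / L).card : ℝ) / L.card) ^ (i + 1 + i) * L.card := by
      have h2 := (NNRat.cast_le (K := ℝ)).2 h
      push_cast at h2
      exact h2
    refine h'.trans ?_
    have e : n ^ (3 * η * (2 * i + 1)) = (n ^ (3 * η)) ^ (i + 1 + i) := by
      rw [← Real.rpow_natCast, ← Real.rpow_mul hn0.le]; congr 1; push_cast; ring
    rw [e]
    gcongr
    rw [div_le_iff₀ hLpos]
    exact hLL
  set f : G → ℕ := fun a => (L.filter (fun l => a / l ∈ A)).card with hf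
  set A1 : Finset G := A.filter (fun a => (L.card : ℝ) * n ^ (- (2 * η)) ≤ (f a : ℝ)) with hA1
  have hsum : (L.card : ℝ) * n ^ (1 - δ j) ≤ ∑ a ∈ A, (f a : ℝ) := by
    have e : ∑ a ∈ A, (f a : ℝ) = ∑ l ∈ L, (mulRep A l : ℝ) := by
      simp only [hf, mulRep, card_filter, Nat.cast_sum]
      rw [sum_comm]
    rw [e, ← nsmul_eq_mul]
    apply card_nsmul_le_sum
    intro l hl
    have := hL1 hl
    simpa [hU, mulNear] using this
  have hn2η : n ^ (-(2 * η)) ≤ n ^ (- δ j) / 2 := by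
    have h1 : n ^ (-(2 * η)) = n ^ (-η) * n ^ (-η) := by
      rw [← Real.rpow_add hn0]; congr 1; ring
    have h2 : n ^ (-η) ≤ n ^ (-δ j) := Real.rpow_le_rpow_of_exponent_le hn1 (by linarith)
    have h3 : n ^ (-η) ≤ 1 / 2 := by
      rw [Real.rpow_neg hn0.le, ← one_div]
      apply one_div_le_one_div_of_le (by norm_num) hn2
    have h4 : 0 < n ^ (-δ j) := by positivity
    have h5 : 0 < n ^ (-η) := by positivity
    rw [h1]
    nlinarith
  have hA1c : n ^ (1 - 2 * η) ≤ A1.card := by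
    have h1 : ∑ a ∈ A, (f a : ℝ) ≤ A1.card * L.card + A.card * (L.card * n ^ (-(2 * η))) := by
      rw [← sum_filter_add_sum_filter_not A (fun a => (L.card : ℝ) * n ^ (- (2 * η)) ≤ (f a : ℝ))]
      apply add_le_add
      · refine (sum_le_card_nsmul _ _ (L.card : ℝ) ?_).trans (le_of_eq (nsmul_eq_mul _ _))
        intro a _
        exact_mod_cast card_filter_le _ _
      · calc _ ≤ ((A.filter (fun a => ¬ (L.card : ℝ) * n ^ (- (2 * η)) ≤ (f a : ℝ))).card : ℝ)
              * (L.card * n ^ (-(2 * η))) := by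
              refine (sum_le_card_nsmul _ _ ((L.card : ℝ) * n ^ (-(2 * η))) ?_).trans
                (le_of_eq (nsmul_eq_mul _ _))
              intro a ha
              exact (not_le.1 (mem_filter.1 ha).2).le
          _ ≤ _ := by
              gcongr
              exact filter_subset _ _
    have h2 := hsum.trans h1
    have h3 : (L.card : ℝ) * n ^ (1 - δ j) ≤ L.card * (A1.card + n * n ^ (-(2 * η))) := by
      rw [hA] at h2
      linarith
    have h4 := le_of_mul_le_mul_left h3 hLpos
    have e1 : n ^ (1 - δ j) = n * n ^ (-δ j) := by
      rw [sub_eq_add_neg, Real.rpow_add hn0, Real.rpow_one]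
    have e2 : n ^ (1 - 2 * η) = n * n ^ (-(2 * η)) := by
      rw [sub_eq_add_neg, Real.rpow_add hn0, Real.rpow_one]
    rw [e2]
    rw [e1] at h4
    nlinarith
  refine ⟨A1, filter_subset _ _, L / L, ?_, hA1c, ?_, ?_⟩
  · obtain ⟨l, hl⟩ := hLne
    exact mem_div.2 ⟨l, hl, l, hl, div_self' l⟩
  · refine (hU0.trans hUL).trans ?_
    have hle : L.card ≤ (L / L).card := card_le_card_div_right hLne
    apply mul_le_mul_of_nonneg_left _ (by positivity)
    exact_mod_cast hle
  · intro i
    have hLG : L * (L / L) ^ i = L ^ (i + 1) / L ^ i := by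
      rw [div_pow, pow_succ, mul_div_assoc', mul_comm]
    have key : ((A1 * (L / L) ^ i).card : ℝ) * (L.card * n ^ (-(2 * η))) ≤
        A.card * (L * (L / L) ^ i).card := by
      have h1 : ∀ w ∈ A1 * (L / L) ^ i, (L.card : ℝ) * n ^ (-(2 * η)) ≤
          (((A ×ˢ (L * (L / L) ^ i)).filter (fun q => q.1 * q.2 = w)).card : ℝ) := by
        intro w hw
        obtain ⟨a, ha, g, hg, rfl⟩ := mem_mul.1 hw
        have ha' := (mem_filter.1 ha).2
        refine ha'.trans ?_
        have : f a ≤ ((A ×ˢ (L * (L / L) ^ i)).filter (fun q => q.1 * q.2 = a * g)).card := by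
          apply card_le_card_of_injOn (fun l => (a / l, l * g))
          · intro l hl
            have hl' := mem_filter.1 hl
            simp only [coe_filter, mem_product, Set.mem_ofPred_eq]
            refine ⟨⟨hl'.2, mul_mem_mul hl'.1 hg⟩, ?_⟩
            rw [← mul_assoc, div_mul_cancel]
          · intro l _ l' _ h
            have := congrArg Prod.snd h
            simpa using this
        exact_mod_cast this
      have h2 := card_nsmul_le_sum _ _ _ h1
      rw [nsmul_eq_mul] at h2
      refine h2.trans ?_
      have h3 : ∑ w ∈ A1 * (L / L) ^ i,
          ((A ×ˢ (L * (L / L) ^ i)).filter (fun q => q.1 * q.2 = w)).card ≤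
          (A ×ˢ (L * (L / L) ^ i)).card := by
        rw [← card_biUnion]
        · apply card_le_card
          intro q hq
          obtain ⟨w, _, hw⟩ := mem_biUnion.1 hq
          exact (mem_filter.1 hw).1
        · intro w _ w' _ hne
          rw [Function.onFun, disjoint_left]
          intro q hq hq'
          exact hne ((mem_filter.1 hq).2.symm.trans (mem_filter.1 hq').2)
      rw [card_product] at h3
      exact_mod_cast h3
    rw [hLG, hA] at key
    have h5 := hplu i
    have h6 : ((A1 * (L / L) ^ i).card : ℝ) * (L.card * n ^ (-(2 * η))) ≤
        n * (n ^ (3 * η * (2 * i + 1)) * L.card) := key.trans (by gcongr)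
    have e : n ^ (1 + 2 * η + 3 * η * (2 * i + 1)) * n ^ (-(2 * η)) =
        n * n ^ (3 * η * (2 * i + 1)) := by
      rw [← Real.rpow_add hn0]
      conv_rhs => rw [← Real.rpow_one n, ← Real.rpow_mul hn0.le, ← Real.rpow_add hn0]
      congr 1; ring
    have h7 : ((A1 * (L / L) ^ i).card : ℝ) * (L.card * n ^ (-(2 * η))) ≤
        n ^ (1 + 2 * η + 3 * η * (2 * i + 1)) * (L.card * n ^ (-(2 * η))) := by
      refine h6.trans (le_of_eq ?_)
      rw [← mul_assoc, ← e]; ring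
    exact le_of_mul_le_mul_right h7 (by positivity)

end SidonAux

namespace SidonAux
open Finset
open scoped Pointwise

section fieldpart
variable {F : Type*} [Field F] [DecidableEq F]

/-- dilate of a set -/
def dil (x : F) (U : Finset F) : Finset F := U.image (fun u => x * u)

/-- `x` is a good dilation for `U` -/
def Good (B : ℝ) (U : Finset F) (x : F) : Prop := ((U + dil x U).card : ℝ) ≤ B * U.card

lemma mem_dil {x : F} {U : Finset F} {z : F} : z ∈ dil x U ↔ ∃ u ∈ U, x * u = z := by
  simp [dil]

lemma card_dil {x : F} (hx : x ≠ 0) (U : Finset F) : (dil x U).card = U.card :=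
  card_image_of_injective _ (mul_right_injective₀ hx)

lemma dil_add (x : F) (U V : Finset F) : dil x (U + V) = dil x U + dil x V := by
  ext z
  simp only [mem_dil, mem_add]
  constructor
  · rintro ⟨u, ⟨a, ha, b, hb, rfl⟩, rfl⟩
    exact ⟨x * a, ⟨a, ha, rfl⟩, x * b, ⟨b, hb, rfl⟩, by ring⟩
  · rintro ⟨_, ⟨a, ha, rfl⟩, _, ⟨b, hb, rfl⟩, rfl⟩
    exact ⟨a + b, ⟨a, ha, b, hb, rfl⟩, by ring⟩

lemma dil_dil (x y : F) (U : Finset F) : dil x (dil y U) = dil (x * y) U := by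
  simp [dil, image_image, Function.comp_def, mul_assoc]

lemma dil_one (U : Finset F) : dil 1 U = U := by simp [dil]

lemma Good.mono {B B' : ℝ} {U : Finset F} {x : F} (h : Good B U x) (hB : B ≤ B') :
    Good B' U x := by
  unfold Good at *
  refine h.trans ?_
  gcongr

lemma good_zero {B : ℝ} (hB : 1 ≤ B) (U : Finset F) : Good B U 0 := by
  unfold Good
  have h : U + dil 0 U ⊆ U := by
    intro z hz
    obtain ⟨a, ha, b, hb, rfl⟩ := mem_add.1 hz
    obtain ⟨u, _, rfl⟩ := mem_dil.1 hb
    simpa using ha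
  have h2 : ((U + dil 0 U).card : ℝ) ≤ U.card := by exact_mod_cast card_le_card h
  have : (0:ℝ) ≤ U.card := by positivity
  nlinarith

lemma good_mul {B : ℝ} (hB : 1 ≤ B) {U : Finset F} (hU : U.Nonempty) {x y : F}
    (hx : Good B U x) (hy : Good B U y) : Good (B ^ 2) U (x * y) := by
  by_cases h0 : x = 0
  · subst h0
    rw [zero_mul]
    exact good_zero (by nlinarith) U
  have h := ruzsa_triangle_inequality_add_add_add U (dil x U) (dil (x * y) U)
  rw [card_dil h0, ← dil_dil, ← dil_add, card_dil h0] at h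
  have h' : ((U + dil x (dil y U)).card : ℝ) * U.card ≤
      (U + dil x U).card * (U + dil y U).card := by exact_mod_cast h
  rw [dil_dil] at h'
  unfold Good at *
  have hUp : (0:ℝ) < U.card := by exact_mod_cast hU.card_pos
  have : ((U + dil (x * y) U).card : ℝ) * U.card ≤ (B ^ 2 * U.card) * U.card := by
    refine h'.trans ?_
    calc _ ≤ (B * (U.card : ℝ)) * (B * U.card) := by gcongr
      _ = _ := by ring
  exact le_of_mul_le_mul_right this hUp

lemma good_inv {B : ℝ} (hB : 1 ≤ B) {U : Finset F} {x : F}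
    (hx : Good B U x) : Good B U x⁻¹ := by
  by_cases h0 : x = 0
  · subst h0
    rw [inv_zero]; exact hx
  unfold Good at *
  have : (U + dil x⁻¹ U).card = (U + dil x U).card := by
    rw [← card_dil h0 (U + dil x⁻¹ U), dil_add, dil_dil, mul_inv_cancel₀ h0, dil_one, add_comm]
  rw [this]; exact hx

lemma good_add {B : ℝ} (hB : 1 ≤ B) {U : Finset F} (hU : U.Nonempty) {x y : F}
    (h1 : Good B U 1) (hx : Good B U x) (hy : Good B U y) : Good (27 * B ^ 3) U (x + y) := by
  set V := U ∪ dil x U ∪ dil y U with hV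
  have hUp : (0:ℝ) < U.card := by exact_mod_cast hU.card_pos
  have hUV : ((U + V).card : ℝ) ≤ 3 * B * U.card := by
    have e : U + V = (U + U) ∪ (U + dil x U) ∪ (U + dil y U) := by
      rw [hV, add_union, add_union]
    have h2 : (U + V).card ≤ (U + U).card + (U + dil x U).card + (U + dil y U).card := by
      rw [e]
      exact (card_union_le _ _).trans (Nat.add_le_add_right (card_union_le _ _) _)
    have h2' : ((U + V).card : ℝ) ≤ (U + U).card + (U + dil x U).card + (U + dil y U).card := by
      exact_mod_cast h2
    unfold Good at *
    rw [dil_one] at h1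
    linarith
  have h := pluennecke_ruzsa_inequality_nsmul_add hU V 3
  have h' : ((3 • V).card : ℝ) ≤ (((U + V).card : ℝ) / U.card) ^ 3 * U.card := by
    have h2 := (NNRat.cast_le (K := ℝ)).2 h
    push_cast at h2
    exact h2
  have hsub : U + dil (x + y) U ⊆ 3 • V := by
    intro z hz
    obtain ⟨a, ha, b, hb, rfl⟩ := mem_add.1 hz
    obtain ⟨u, hu, rfl⟩ := mem_dil.1 hb
    have e : (3 • V) = V + V + V := by
      rw [succ_nsmul, two_nsmul]
    rw [e, add_mul, ← add_assoc]
    refine add_mem_add (add_mem_add ?_ ?_) ?_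
    · simp [hV, ha]
    · simp only [hV, mem_union, mem_dil]; exact Or.inl (Or.inr ⟨u, hu, rfl⟩)
    · simp only [hV, mem_union, mem_dil]; exact (Or.inr ⟨u, hu, rfl⟩)
  unfold Good
  calc ((U + dil (x + y) U).card : ℝ) ≤ (3 • V).card := by exact_mod_cast card_le_card hsub
    _ ≤ _ := h'
    _ ≤ (3 * B) ^ 3 * U.card := by
        gcongr
        rw [div_le_iff₀ hUp]; exact hUV
    _ = _ := by ring

lemma good_energy {B : ℝ} {U : Finset F} (hU : U.Nonempty) {x : F} (hx : Good B U x) :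
    (U.card : ℝ) ^ 3 ≤ B * (((U ×ˢ U) ×ˢ (U ×ˢ U)).filter
      (fun q => q.1.1 + x * q.1.2 = q.2.1 + x * q.2.2)).card := by
  set f : F × F → F := fun q => q.1 + x * q.2 with hf
  set W := U + dil x U with hW
  have hmaps : ∀ q ∈ U ×ˢ U, f q ∈ W := by
    intro q hq
    rw [mem_product] at hq
    exact add_mem_add hq.1 (mem_dil.2 ⟨_, hq.2, rfl⟩)
  have h1 := card_eq_sum_card_fiberwise (f := f) (s := U ×ˢ U) (t := W) (by
    intro q hq; exact hmaps q hq)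
  have h2 : (((U ×ˢ U) ×ˢ (U ×ˢ U)).filter
      (fun q => q.1.1 + x * q.1.2 = q.2.1 + x * q.2.2)).card =
      ∑ w ∈ W, ((U ×ˢ U).filter (fun q => f q = w)).card ^ 2 := by
    rw [card_eq_sum_card_fiberwise (f := fun q : (F × F) × (F × F) => f q.1) (t := W)]
    · apply sum_congr rfl
      intro w _
      rw [sq, ← card_product]
      congr 1
      ext ⟨q, q'⟩
      simp only [mem_filter, mem_product, hf]
      constructor
      · rintro ⟨⟨⟨a, b⟩, h⟩, h'⟩
        exact ⟨⟨a, h'⟩, b, h ▸ h'⟩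
      · rintro ⟨⟨a, h'⟩, b, h⟩
        exact ⟨⟨⟨a, b⟩, h'.trans h.symm⟩, h'⟩
    · intro q hq
      have := (mem_filter.1 hq).1
      rw [mem_product] at this
      exact hmaps _ this.1
  have h3 := sq_sum_le_card_mul_sum_sq (s := W)
    (f := fun w => (((U ×ˢ U).filter (fun q => f q = w)).card : ℝ))
  have h1' : ∑ w ∈ W, (((U ×ˢ U).filter (fun q => f q = w)).card : ℝ) = (U.card : ℝ) * U.card := by
    rw [card_product] at h1
    exact_mod_cast h1.symm
  rw [h1'] at h3
  have h2' : ((((U ×ˢ U) ×ˢ (U ×ˢ U)).filter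
      (fun q => q.1.1 + x * q.1.2 = q.2.1 + x * q.2.2)).card : ℝ) =
      ∑ w ∈ W, (((U ×ˢ U).filter (fun q => f q = w)).card : ℝ) ^ 2 := by exact_mod_cast h2
  rw [← h2'] at h3
  set E : ℝ := ((((U ×ˢ U) ×ˢ (U ×ˢ U)).filter
      (fun q => q.1.1 + x * q.1.2 = q.2.1 + x * q.2.2)).card : ℝ) with hE
  have hE0 : 0 ≤ E := by positivity
  have hUp : (0:ℝ) < U.card := by exact_mod_cast hU.card_pos
  unfold Good at hx
  have h4 : (U.card : ℝ) * (U.card : ℝ) ^ 3 ≤ U.card * (B * E) := by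
    calc _ = ((U.card : ℝ) * U.card) ^ 2 := by ring
      _ ≤ _ := h3
      _ ≤ (B * U.card) * E := by gcongr
      _ = _ := by ring
  exact le_of_mul_le_mul_left h4 hUp

lemma good_count {B : ℝ} {U : Finset F} (hU : U.Nonempty) (hB0 : 0 ≤ B)
    (hB : 2 * B ≤ U.card) (X : Finset F) (hX : ∀ x ∈ X, Good B U x) :
    (X.card : ℝ) ≤ 2 * B * U.card := by
  have hUp : (0:ℝ) < U.card := by exact_mod_cast hU.card_pos
  have h1 : (X.card : ℝ) * (U.card : ℝ) ^ 3 ≤ B * ∑ x ∈ X, ((((U ×ˢ U) ×ˢ (U ×ˢ U)).filter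
      (fun q => q.1.1 + x * q.1.2 = q.2.1 + x * q.2.2)).card : ℝ) := by
    rw [mul_sum, ← nsmul_eq_mul]
    apply card_nsmul_le_sum
    intro x hx
    exact good_energy hU (hX x hx)
  have h2 : ∑ x ∈ X, (((U ×ˢ U) ×ˢ (U ×ˢ U)).filter
      (fun q => q.1.1 + x * q.1.2 = q.2.1 + x * q.2.2)).card ≤
      X.card * U.card ^ 2 + U.card ^ 4 := by
    have e : ∑ x ∈ X, (((U ×ˢ U) ×ˢ (U ×ˢ U)).filter
      (fun q => q.1.1 + x * q.1.2 = q.2.1 + x * q.2.2)).card =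
      ∑ q ∈ (U ×ˢ U) ×ˢ (U ×ˢ U),
        (X.filter (fun x => q.1.1 + x * q.1.2 = q.2.1 + x * q.2.2)).card := by
      simp only [card_filter]
      rw [sum_comm]
    rw [e]
    have hb : ∀ q ∈ (U ×ˢ U) ×ˢ (U ×ˢ U),
        (X.filter (fun x => q.1.1 + x * q.1.2 = q.2.1 + x * q.2.2)).card ≤
        (if q.1 = q.2 then X.card else 0) + 1 := by
      intro q _
      split_ifs with h
      · exact (card_filter_le _ _).trans (Nat.le_succ _)
      · rw [zero_add, card_le_one]
        intro x hx y hy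
        have hx' := (mem_filter.1 hx).2
        have hy' := (mem_filter.1 hy).2
        have h3 : (x - y) * (q.1.2 - q.2.2) = 0 := by linear_combination hx' - hy'
        rcases mul_eq_zero.1 h3 with h4 | h4
        · exact sub_eq_zero.1 h4
        · exfalso
          apply h
          have h5 := sub_eq_zero.1 h4
          rw [h5] at hx'
          exact Prod.ext (add_right_cancel hx') h5
    refine (sum_le_sum hb).trans ?_
    rw [sum_add_distrib, sum_const, smul_eq_mul, mul_one, card_product, card_product, ← sum_filter,
      sum_const, smul_eq_mul]
    have h6 : (((U ×ˢ U) ×ˢ (U ×ˢ U)).filter (fun q => q.1 = q.2)).card ≤ U.card ^ 2 := by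
      rw [sq, ← card_product]
      apply card_le_card_of_injOn (fun q => q.1)
      · intro q hq
        exact (mem_product.1 (mem_filter.1 hq).1).1
      · intro q hq q' hq' h
        have a := (mem_filter.1 hq).2
        have b := (mem_filter.1 hq').2
        exact Prod.ext h (a.symm.trans (Eq.trans h b))
    have := Nat.mul_le_mul_right X.card h6
    nlinarith
  have h2' : ∑ x ∈ X, ((((U ×ˢ U) ×ˢ (U ×ˢ U)).filter
      (fun q => q.1.1 + x * q.1.2 = q.2.1 + x * q.2.2)).card : ℝ) ≤
      (X.card : ℝ) * (U.card : ℝ) ^ 2 + (U.card : ℝ) ^ 4 := by exact_mod_cast h2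
  have h3 := h1.trans (mul_le_mul_of_nonneg_left h2' hB0)
  have hX0 : (0:ℝ) ≤ X.card := by positivity
  have h4 : (X.card : ℝ) * (U.card : ℝ) ^ 2 * (2 * B) ≤ (X.card : ℝ) * (U.card : ℝ) ^ 2 * U.card := by
    gcongr
  have h5 : (U.card : ℝ) ^ 3 * X.card ≤ (U.card : ℝ) ^ 3 * (2 * B * U.card) := by nlinarith
  exact le_of_mul_le_mul_left h5 (by positivity)

/-- levels -/
def lev (B : ℝ) (i : ℕ) : ℝ := B ^ (4 ^ i)

lemma lev_zero (B : ℝ) : lev B 0 = B := by simp [lev]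
lemma lev_succ (B : ℝ) (i : ℕ) : lev B (i + 1) = lev B i ^ 4 := by
  unfold lev; rw [pow_succ, pow_mul]
lemma lev_ge {B : ℝ} (hB : 27 ≤ B) (i : ℕ) : 27 ≤ lev B i := by
  induction i with
  | zero => rw [lev_zero]; exact hB
  | succ i ih =>
    rw [lev_succ]
    nlinarith [sq_nonneg (lev B i), mul_self_le_mul_self (by norm_num : (0:ℝ) ≤ 27) ih]
lemma lev_mono {B : ℝ} (hB : 27 ≤ B) : Monotone (lev B) := by
  apply monotone_nat_of_le_succ
  intro i
  rw [lev_succ]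
  exact le_self_pow₀ (by linarith [lev_ge hB i]) (by norm_num)

variable {B : ℝ} {U : Finset F}

lemma glev_add (hB : 27 ≤ B) (hU : U.Nonempty) (h1 : Good B U 1) {i : ℕ} {x y : F}
    (hx : Good (lev B i) U x) (hy : Good (lev B i) U y) : Good (lev B (i + 1)) U (x + y) := by
  have h27 := lev_ge hB i
  have h1' : Good (lev B i) U 1 := h1.mono (by
    have := lev_mono hB (Nat.zero_le i); rwa [lev_zero] at this)
  refine (good_add (by linarith) hU h1' hx hy).mono ?_
  rw [lev_succ, pow_succ (lev B i) 3, mul_comm]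
  gcongr

lemma glev_mul (hB : 27 ≤ B) (hU : U.Nonempty) {i : ℕ} {x y : F}
    (hx : Good (lev B i) U x) (hy : Good (lev B i) U y) : Good (lev B (i + 1)) U (x * y) := by
  have h27 := lev_ge hB i
  refine (good_mul (by linarith) hU hx hy).mono ?_
  rw [lev_succ]
  exact pow_le_pow_right₀ (by linarith) (by norm_num)

lemma glev_mono (hB : 27 ≤ B) {i j : ℕ} (hij : i ≤ j) {x : F}
    (hx : Good (lev B i) U x) : Good (lev B j) U x := hx.mono (lev_mono hB hij)

lemma glev_sub (hB : 27 ≤ B) (hU : U.Nonempty) (h1 : Good B U 1) (hm : Good B U (-1)) {i : ℕ}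
    {x y : F} (hx : Good (lev B i) U x) (hy : Good (lev B i) U y) :
    Good (lev B (i + 2)) U (x - y) := by
  have hm' : Good (lev B i) U (-1) := hm.mono (by
    have := lev_mono hB (Nat.zero_le i); rwa [lev_zero] at this)
  have h := glev_add hB hU h1 (glev_mono hB (Nat.le_succ i) hx) (glev_mul hB hU hm' hy)
  rwa [neg_one_mul, ← sub_eq_add_neg] at h

end fieldpart

lemma pivot {p : ℕ} [Fact p.Prime] {B : ℝ} {U : Finset (ZMod p)} (hB : 27 ≤ B) (hU : U.Nonempty)
    (h1 : Good B U 1) (hm : Good B U (-1)) (i : ℕ) (hi : 2 * lev B (i + 3) ≤ U.card)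
    (hp : 2 * lev B (i + 3) * U.card < p)
    (X : Finset (ZMod p)) (hX : ∀ x ∈ X, Good (lev B i) U x) (hX2 : 2 ≤ X.card) :
    ∃ X' : Finset (ZMod p), (∀ x ∈ X', Good (lev B (i + 6)) U x) ∧ X'.card = X.card ^ 2 := by
  classical
  set R : Finset (ZMod p) := (X - X) / (X - X) with hR
  have hRg : ∀ r ∈ R, Good (lev B (i + 3)) U r := by
    intro r hr
    obtain ⟨a, ha, b, hb, rfl⟩ := mem_div.1 hr
    obtain ⟨x, hx, y, hy, rfl⟩ := mem_sub.1 ha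
    obtain ⟨z, hz, w, hw, rfl⟩ := mem_sub.1 hb
    rw [div_eq_mul_inv]
    exact glev_mul hB hU (glev_sub hB hU h1 hm (hX _ hx) (hX _ hy))
      (good_inv (by linarith [lev_ge hB (i + 2)]) (glev_sub hB hU h1 hm (hX _ hz) (hX _ hw)))
  have hRc := good_count hU (by linarith [lev_ge hB (i + 3)]) hi R hRg
  have hRne : R ≠ univ := by
    intro h
    rw [h, card_univ, ZMod.card] at hRc
    linarith
  obtain ⟨x0, hx0, y0, hy0, hxy⟩ := one_lt_card.1 (show 1 < X.card by omega)
  have h0 : (0 : ZMod p) ∈ R := by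
    refine mem_div.2 ⟨0, mem_sub.2 ⟨x0, hx0, x0, hx0, sub_self _⟩, x0 - y0,
      mem_sub.2 ⟨x0, hx0, y0, hy0, rfl⟩, zero_div _⟩
  have hex : ∃ ξ ∈ R, ξ + 1 ∉ R := by
    by_contra hcon
    push Not at hcon
    apply hRne
    have hnat : ∀ k : ℕ, (k : ZMod p) ∈ R := by
      intro k
      induction k with
      | zero => simpa using h0
      | succ k ih => push_cast; exact hcon _ ih
    rw [eq_univ_iff_forall]
    intro z
    have := hnat z.val
    rwa [ZMod.natCast_zmod_val] at this
  obtain ⟨ξ, hξ, hξ1⟩ := hex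
  have hg1 : Good (lev B (i + 4)) U (ξ + 1) := by
    refine glev_add hB hU h1 (hRg ξ hξ) (h1.mono ?_)
    have := lev_mono hB (Nat.zero_le (i + 3)); rwa [lev_zero] at this
  refine ⟨(X ×ˢ X).image (fun q => q.1 + (ξ + 1) * q.2), ?_, ?_⟩
  · intro z hz
    obtain ⟨q, hq, rfl⟩ := mem_image.1 hz
    rw [mem_product] at hq
    refine glev_add hB hU h1 (glev_mono hB (by omega) (hX _ hq.1))
      (glev_mul hB hU hg1 (glev_mono hB (by omega) (hX _ hq.2)))
  · rw [card_image_of_injOn, card_product, sq]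
    intro q hq q' hq' h
    have hq := mem_product.1 (mem_coe.1 hq)
    have hq' := mem_product.1 (mem_coe.1 hq')
    simp only at h
    by_cases h2 : q.2 = q'.2
    · rw [h2] at h
      exact Prod.ext (add_right_cancel h) h2
    · exfalso
      apply hξ1
      refine mem_div.2 ⟨_, sub_mem_sub hq'.1 hq.1, _, sub_mem_sub hq.2 hq'.2, ?_⟩
      rw [div_eq_iff (sub_ne_zero.2 h2)]
      linear_combination (-1 : ZMod p) * h

lemma pivot_twice {p : ℕ} [Fact p.Prime] {B : ℝ} {U : Finset (ZMod p)} (hB : 27 ≤ B)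
    (hU : U.Nonempty) (h1 : Good B U 1) (hm : Good B U (-1)) (hi : 2 * lev B 12 ≤ U.card)
    (hp : 2 * lev B 12 * U.card < p)
    (X : Finset (ZMod p)) (hX : ∀ x ∈ X, Good B U x) (hX2 : 2 ≤ X.card) :
    (X.card : ℝ) ^ 4 ≤ 2 * lev B 12 * U.card := by
  have hl : ∀ i ≤ 12, lev B i ≤ lev B 12 := fun i hi => lev_mono hB hi
  have hp' : ∀ i ≤ 12, 2 * lev B i * U.card < p := by
    intro i hi
    refine lt_of_le_of_lt ?_ hp
    have := hl i hi
    gcongr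
  obtain ⟨X1, hX1, hc1⟩ := pivot hB hU h1 hm 0 (by linarith [hl 3 (by norm_num)])
    (hp' 3 (by norm_num)) X (by simpa [lev_zero] using hX) hX2
  obtain ⟨X2, hX2', hc2⟩ := pivot hB hU h1 hm 6 (by linarith [hl 9 (by norm_num)])
    (hp' 9 (by norm_num)) X1 (by simpa using hX1) (by rw [hc1]; nlinarith)
  have h := good_count hU (by linarith [lev_ge hB 12]) hi X2 hX2'
  rw [hc2, hc1] at h
  push_cast at h
  calc (X.card : ℝ) ^ 4 = ((X.card : ℝ) ^ 2) ^ 2 := by ring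
    _ ≤ _ := h

set_option maxHeartbeats 1000000 in
lemma many_good {F : Type*} [Field F] [DecidableEq F] {C : ℝ} (hC : 1 ≤ C)
    (Γ U V : Finset F) (hΓ0 : (0 : F) ∉ Γ) (hΓ : Γ.Nonempty) (hU : U.Nonempty)
    (hV : ∀ γ ∈ Γ, dil γ U ⊆ V) (hVc : (V.card : ℝ) ≤ C * U.card)
    (hUU : ((U - U).card : ℝ) ≤ C * U.card) :
    (∃ X : Finset F, (∀ x ∈ X, Good (2 * C ^ 5) U x) ∧ (Γ.card : ℝ) ≤ 2 * C * X.card) ∧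
      Good (2 * C ^ 5) U 1 ∧ Good (2 * C ^ 5) U (-1) := by
  have hUp : (0:ℝ) < U.card := by exact_mod_cast hU.card_pos
  have hΓp : (0:ℝ) < Γ.card := by exact_mod_cast hΓ.card_pos
  have hne : ∀ γ ∈ Γ, γ ≠ 0 := fun γ hγ h => hΓ0 (h ▸ hγ)
  have hsum : ((U + U).card : ℝ) ≤ C ^ 2 * U.card := by
    have h := ruzsa_triangle_inequality_add_sub_sub U U U
    have h' : ((U + U).card : ℝ) * U.card ≤ (U - U).card * (U - U).card := by exact_mod_cast h
    have h2 : ((U + U).card : ℝ) * U.card ≤ (C ^ 2 * U.card) * U.card := by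
      refine h'.trans ?_
      calc _ ≤ (C * (U.card : ℝ)) * (C * U.card) := by gcongr
        _ = _ := by ring
    exact le_of_mul_le_mul_right h2 hUp
  have hC2 : C ^ 2 ≤ 2 * C ^ 5 := by
    have : C ^ 2 ≤ C ^ 5 := pow_le_pow_right₀ hC (by norm_num)
    have : 0 ≤ C ^ 5 := by positivity
    linarith
  have hC1 : C ≤ 2 * C ^ 5 := by
    have : C ≤ C ^ 5 := le_self_pow₀ hC (by norm_num)
    have : 0 ≤ C ^ 5 := by positivity
    linarith
  refine ⟨?_, ?_, ?_⟩
  · -- the Cauchy-Schwarz step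
    set I : F → F → ℕ := fun γ γ' => (dil γ U ∩ dil γ' U).card with hI
    have hcs : (Γ.card : ℝ) ^ 2 * U.card ≤ C * ∑ γ' ∈ Γ, ∑ γ ∈ Γ, (I γ γ' : ℝ) := by
      have e1 : ∑ v ∈ V, ((Γ.filter (fun γ => v ∈ dil γ U)).card : ℝ) = (Γ.card : ℝ) * U.card := by
        have : ∑ v ∈ V, (Γ.filter (fun γ => v ∈ dil γ U)).card = Γ.card * U.card := by
          simp only [card_filter]
          rw [sum_comm]
          rw [← smul_eq_mul, ← sum_const]
          apply sum_congr rfl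
          intro γ hγ
          rw [← card_filter, ← card_dil (hne γ hγ) U]
          congr 1
          ext v
          simp only [mem_filter]
          exact ⟨fun h => h.2, fun h => ⟨hV γ hγ h, h⟩⟩
        exact_mod_cast this
      have e2 : ∑ v ∈ V, ((Γ.filter (fun γ => v ∈ dil γ U)).card : ℝ) ^ 2 =
          ∑ γ' ∈ Γ, ∑ γ ∈ Γ, (I γ γ' : ℝ) := by
        have : ∑ v ∈ V, (Γ.filter (fun γ => v ∈ dil γ U)).card ^ 2 =
            ∑ γ' ∈ Γ, ∑ γ ∈ Γ, I γ γ' := by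
          have a1 : ∀ v ∈ V, (Γ.filter (fun γ => v ∈ dil γ U)).card ^ 2 =
              ∑ γ' ∈ Γ, ∑ γ ∈ Γ, if v ∈ dil γ U ∧ v ∈ dil γ' U then 1 else 0 := by
            intro v _
            rw [sq, card_filter, sum_mul_sum, sum_comm]
            apply sum_congr rfl
            intro γ' _
            apply sum_congr rfl
            intro γ _
            split_ifs <;> simp_all
          rw [sum_congr rfl a1, sum_comm]
          apply sum_congr rfl
          intro γ' _
          rw [sum_comm]
          apply sum_congr rfl
          intro γ hγ
          rw [← card_filter]
          simp only [hI]
          congr 1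
          ext v
          simp only [mem_filter, mem_inter]
          exact ⟨fun h => h.2, fun h => ⟨hV γ hγ h.1, h⟩⟩
        exact_mod_cast this
      have h3 := sq_sum_le_card_mul_sum_sq (s := V)
        (f := fun v => ((Γ.filter (fun γ => v ∈ dil γ U)).card : ℝ))
      rw [e1, e2] at h3
      set T : ℝ := ∑ γ' ∈ Γ, ∑ γ ∈ Γ, (I γ γ' : ℝ) with hT
      have hT0 : 0 ≤ T := sum_nonneg (fun _ _ => sum_nonneg (fun _ _ => Nat.cast_nonneg _))
      clear_value T
      have h4 : (U.card : ℝ) * ((Γ.card : ℝ) ^ 2 * U.card) ≤ U.card * (C * T) := by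
        calc _ = ((Γ.card : ℝ) * U.card) ^ 2 := by ring
          _ ≤ _ := h3
          _ ≤ (C * U.card) * T := by gcongr
          _ = _ := by ring
      exact le_of_mul_le_mul_left h4 hUp
    obtain ⟨γ', hγ', hmax⟩ : ∃ γ' ∈ Γ, (Γ.card : ℝ) * U.card ≤ C * ∑ γ ∈ Γ, (I γ γ' : ℝ) := by
      by_contra hcon
      push Not at hcon
      have : C * ∑ γ' ∈ Γ, ∑ γ ∈ Γ, (I γ γ' : ℝ) < ∑ γ' ∈ Γ, (Γ.card : ℝ) * U.card := by
        rw [mul_sum]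
        exact sum_lt_sum_of_nonempty hΓ hcon
      rw [sum_const, nsmul_eq_mul] at this
      nlinarith
    set L := Γ.filter (fun γ => (U.card : ℝ) ≤ 2 * C * (I γ γ' : ℝ)) with hL
    have hLc : (Γ.card : ℝ) ≤ 2 * C * L.card := by
      have hb : ∀ γ ∈ Γ, 2 * C * (I γ γ' : ℝ) ≤
          (if (U.card : ℝ) ≤ 2 * C * (I γ γ' : ℝ) then 2 * C * U.card else 0) + U.card := by
        intro γ hγ
        split_ifs with h
        · have : (I γ γ' : ℝ) ≤ U.card := by
            have h5 : I γ γ' ≤ U.card := by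
              rw [← card_dil (hne γ hγ) U]
              exact card_le_card inter_subset_left
            exact_mod_cast h5
          nlinarith
        · linarith [not_le.1 h]
      have h6 := sum_le_sum hb
      rw [sum_add_distrib, sum_const, ← sum_filter, sum_const, nsmul_eq_mul, nsmul_eq_mul,
        ← mul_sum] at h6
      have h7 : (U.card : ℝ) * Γ.card ≤ U.card * (2 * C * L.card) := by
        rw [← hL] at h6
        nlinarith
      exact le_of_mul_le_mul_left h7 hUp
    refine ⟨L.image (fun γ => γ / γ'), ?_, ?_⟩
    · intro x hx
      obtain ⟨γ, hγ, rfl⟩ := mem_image.1 hx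
      have hγ2 := mem_filter.1 hγ
      have h0 := hne γ hγ2.1
      have h0' := hne γ' hγ'
      set W := dil γ U ∩ dil γ' U with hW
      have hWc : (U.card : ℝ) ≤ 2 * C * W.card := hγ2.2
      have hWp : (0:ℝ) < W.card := by
        by_contra h
        have : (W.card : ℝ) = 0 := le_antisymm (not_lt.1 h) (Nat.cast_nonneg _)
        rw [this] at hWc
        linarith
      have ht := ruzsa_triangle_inequality_add_add_add (dil γ' U) W (dil γ U)
      have s1 : (dil γ' U + W).card ≤ (U + U).card := by
        rw [← card_dil h0' (U + U), dil_add]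
        exact card_le_card (add_subset_add_left inter_subset_right)
      have s2 : (W + dil γ U).card ≤ (U + U).card := by
        rw [← card_dil h0 (U + U), dil_add]
        exact card_le_card (add_subset_add_right inter_subset_left)
      have e : (dil γ' U + dil γ U).card = (U + dil (γ / γ') U).card := by
        rw [← card_dil h0' (U + dil (γ / γ') U), dil_add, dil_dil, mul_div_cancel₀ _ h0']
      rw [e] at ht
      have ht2 : (U + dil (γ / γ') U).card * W.card ≤ (U + U).card * (U + U).card :=
        ht.trans (Nat.mul_le_mul s1 s2)
      have ht3 : ((U + dil (γ / γ') U).card : ℝ) * W.card ≤ (U + U).card * (U + U).card := by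
        exact_mod_cast ht2
      unfold Good
      set M : ℝ := ((U + dil (γ / γ') U).card : ℝ) with hM
      have hM0 : 0 ≤ M := by positivity
      have h8 : M * W.card ≤ C ^ 4 * U.card * (2 * C * W.card) := by
        calc M * W.card ≤ ((U + U).card : ℝ) * (U + U).card := ht3
          _ ≤ (C ^ 2 * U.card) * (C ^ 2 * U.card) := by gcongr
          _ = C ^ 4 * U.card * U.card := by ring
          _ ≤ C ^ 4 * U.card * (2 * C * W.card) := by gcongr
      have h9 : M * W.card ≤ (2 * C ^ 5 * U.card) * W.card := by
        refine h8.trans (le_of_eq (by ring))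
      exact le_of_mul_le_mul_right h9 hWp
    · rw [card_image_of_injective _ (fun a b h => (div_left_inj' (hne γ' hγ')).1 h)]
      exact hLc
  · unfold Good
    rw [dil_one]
    refine hsum.trans ?_
    gcongr
  · unfold Good
    have : U + dil (-1) U = U - U := by
      have e : dil (-1) U = -U := by
        ext z
        simp only [mem_dil, neg_one_mul, Finset.mem_neg]
      rw [e, sub_eq_add_neg]
    rw [this]
    refine hUU.trans ?_
    gcongr

end SidonAux

namespace SidonAux
open Finset
open scoped Pointwise

lemma exists_params (η : ℝ) (hη : 0 < η) (hη1 : η ≤ 1) : ∃ (J : ℕ) (δ : ℕ → ℝ), 2 ≤ J * η ∧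
    (∀ j, 0 < δ j) ∧ (∀ j < J, 14 * δ j = η * δ (j + 1)) ∧ (∀ j ≤ J, δ j ≤ η) ∧
    (∀ j ≤ J, δ 0 ≤ δ j) := by
  obtain ⟨J, hJ⟩ := exists_nat_ge (2 / η)
  refine ⟨J, fun j => η * (η / 14) ^ (J - j), ?_, ?_, ?_, ?_, ?_⟩
  · rwa [div_le_iff₀ hη] at hJ
  · intro j; positivity
  · intro j hj
    have : J - j = (J - (j + 1)) + 1 := by omega
    simp only
    rw [this, pow_succ]; ring
  · intro j _
    have : (η / 14) ^ (J - j) ≤ 1 := pow_le_one₀ (by positivity) (by linarith)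
    simp only
    nlinarith
  · intro j hj
    simp only
    apply mul_le_mul_of_nonneg_left _ hη.le
    exact pow_le_pow_of_le_one (by positivity) (by linarith) (by omega)

lemma lev_le {B n a : ℝ} (hn : 0 < n) (hB0 : 0 ≤ B) (hB : B ≤ n ^ a) (i : ℕ) :
    0 ≤ lev B i ∧ lev B i ≤ n ^ (a * 4 ^ i) := by
  induction i with
  | zero => simpa [lev_zero] using ⟨hB0, hB⟩
  | succ i ih =>
    rw [lev_succ]
    refine ⟨by positivity, (pow_le_pow_left₀ ih.1 ih.2 4).trans (le_of_eq ?_)⟩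
    rw [← Real.rpow_natCast, ← Real.rpow_mul hn.le]
    congr 1; push_cast; ring

lemma stageA {p : ℕ} [Fact p.Prime]
    (η : ℝ) (hη : 0 < η) (hη1 : η * (200 * 4 ^ 12) ≤ 1) (J : ℕ) (hJ : 2 ≤ J * η) (δ : ℕ → ℝ)
    (hδ0 : ∀ j, 0 < δ j) (hδ : ∀ j < J, 14 * δ j = η * δ (j + 1)) (hδη : ∀ j ≤ J, δ j ≤ η)
    (hδmono : ∀ j ≤ J, δ 0 ≤ δ j)
    (n : ℝ) (hn : 2 ≤ n) (hn2 : 2 ≤ n ^ η) (hp : n ^ 2 < p)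
    (D : ℕ → Finset (ZMod p)) (Γ : Finset (ZMod p)) (h0Γ : (0 : ZMod p) ∉ Γ)
    (h1Γ : (1 : ZMod p) ∈ Γ) (hΓc : n ^ (7 / 20 : ℝ) ≤ Γ.card)
    (hΓD : ∀ j, ∀ γ ∈ Γ, ∀ x ∈ D j, γ * x ∈ D (j + 1))
    (hDc : ∀ j ≤ J, ((D j).card : ℝ) ≤ n ^ (1 + δ 0)) (hD0 : n ^ (1 - δ 0) ≤ ((D 0).card : ℝ)) :
    ((addNear (D 0) (n ^ (1 - δ 0))).card : ℝ) ≤ n ^ (2 / 5 : ℝ) := by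
  classical
  by_contra hbig
  rw [not_le] at hbig
  have hη2 : η ≤ 1 / 100 := by norm_num at hη1; linarith
  have hn0 : 0 < n := by linarith
  have hn1 : 1 ≤ n := by linarith
  have hexp : ∀ a b : ℝ, a ≤ b → n ^ a ≤ n ^ b := fun a b h =>
    Real.rpow_le_rpow_of_exponent_le hn1 h
  have hD : ∀ j, D j ⊆ D (j + 1) := by
    intro j x hx
    simpa using hΓD j 1 h1Γ x hx
  obtain ⟨j, hj, U, hU1, hU2, hU3, hU4⟩ := add_chain η hη hη2 J hJ δ hδ0 hδ hδη hδmono n hn D hD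
    hDc hD0
  set Uj := addNear (D j) (n ^ (1 - δ j)) with hUj
  set V := addNear (D (j + 1)) (n ^ (1 - δ (j + 1))) with hV
  have hD0j : ∀ i, D 0 ⊆ D i := by
    intro i
    induction i with
    | zero => exact Subset.rfl
    | succ i ih => exact ih.trans (hD i)
  have hUjc : n ^ (2 / 5 : ℝ) ≤ Uj.card := by
    have hs : addNear (D 0) (n ^ (1 - δ 0)) ⊆ Uj := by
      intro u hu
      simp only [hUj, addNear, mem_filter, mem_univ, true_and] at hu ⊢
      refine (hexp _ (1 - δ 0) (by linarith [hδmono j hj.le])).trans (hu.trans ?_)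
      exact_mod_cast addRep_mono (hD0j j) u
    have : ((addNear (D 0) (n ^ (1 - δ 0))).card : ℝ) ≤ Uj.card := by
      exact_mod_cast card_le_card hs
    linarith
  have hpos2 : 0 < n ^ (2 / 5 : ℝ) := by positivity
  have hηp : 0 < n ^ η := by positivity
  have hadd : ∀ a b : ℝ, n ^ a * n ^ b = n ^ (a + b) := fun a b => (Real.rpow_add hn0 a b).symm
  have hUjU : (Uj.card : ℝ) ≤ n ^ (2 * η) * U.card := by
    refine hU4.trans ?_
    rw [two_mul η, ← hadd]
    gcongr
  have hUc : n ^ (2 / 5 - 2 * η) ≤ U.card := by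
    have h := hUjc.trans hUjU
    have e : n ^ (2 / 5 : ℝ) = n ^ (2 * η) * n ^ (2 / 5 - 2 * η) := by
      rw [hadd]; congr 1; ring
    rw [e] at h
    exact le_of_mul_le_mul_left h (by positivity)
  have hUp : (0:ℝ) < U.card := lt_of_lt_of_le (by positivity) hUc
  have hUne : U.Nonempty := card_pos.1 (by exact_mod_cast hUp)
  have hVU : (V.card : ℝ) ≤ n ^ (3 * η) * U.card := by
    calc (V.card : ℝ) ≤ n ^ η * (n ^ (2 * η) * U.card) := by
          refine hU3.trans ?_
          gcongr
      _ = _ := by rw [← mul_assoc, hadd]; congr 2; ring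
  have hUUV : U - U ⊆ V := by
    intro z hz
    obtain ⟨x, hx, y, hy, rfl⟩ := mem_sub.1 hz
    exact hU2 x hx y hy
  have hδj1 : δ (j + 1) ≤ η := hδη _ hj
  have hVc : (V.card : ℝ) ≤ n ^ (1 + 3 * η) := by
    have h := addNear_card (D (j + 1)) (n ^ (1 - δ (j + 1)))
    rw [← hV] at h
    have h2 : ((D (j + 1)).card : ℝ) ^ 2 ≤ n ^ (1 + δ 0) * n ^ (1 + δ 0) := by
      rw [sq]
      have := hDc (j + 1) hj
      gcongr
    rw [hadd] at h2
    have h3 : n ^ (1 - δ (j + 1)) * V.card ≤ n ^ (1 - δ (j + 1)) * n ^ (1 + 3 * η) := by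
      refine (h.trans h2).trans ?_
      rw [hadd]
      apply hexp
      linarith [hδη 0 (Nat.zero_le _)]
    exact le_of_mul_le_mul_left h3 (by positivity)
  have hdil : ∀ γ ∈ Γ, dil γ U ⊆ V := by
    intro γ hγ z hz
    obtain ⟨u, hu, rfl⟩ := mem_dil.1 hz
    have hγ0 : γ ≠ 0 := fun h => h0Γ (h ▸ hγ)
    have hu' := hU1 hu
    simp only [hUj, hV, addNear, mem_filter, mem_univ, true_and] at hu' ⊢
    have hle : δ j ≤ δ (j + 1) := by
      have := hδ j hj
      nlinarith [hδ0 (j + 1)]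
    refine (hexp _ (1 - δ j) (by linarith)).trans (hu'.trans ?_)
    have : addRep (D j) u ≤ addRep (D (j + 1)) (γ * u) := by
      unfold addRep
      apply card_le_card_of_injOn (fun x => γ * x)
      · intro x hx
        have hx' := mem_filter.1 (mem_coe.1 hx)
        refine mem_coe.2 (mem_filter.2 ⟨hΓD j γ hγ x hx'.1, ?_⟩)
        have := hΓD j γ hγ _ hx'.2
        rwa [mul_sub] at this
      · intro x _ y _ h
        exact mul_left_cancel₀ hγ0 h
    exact_mod_cast this
  have hUle : (U.card : ℝ) ≤ n ^ (1 + 3 * η) := by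
    refine le_trans ?_ hVc
    have := card_le_card (hdil 1 h1Γ)
    rw [dil_one] at this
    exact_mod_cast this
  set C := n ^ (3 * η) with hC
  have hC1 : 1 ≤ C := Real.one_le_rpow hn1 (by positivity)
  obtain ⟨⟨X, hX, hXc⟩, hg1, hgm⟩ := many_good hC1 Γ U V h0Γ ⟨1, h1Γ⟩ hUne hdil hVU
    (le_trans (by exact_mod_cast card_le_card hUUV) hVU)
  set B := 2 * C ^ 5 with hB
  have hC2 : 2 ≤ C := hn2.trans (hexp _ _ (by linarith))
  have hB27 : 27 ≤ B := by
    have : (2:ℝ) ^ 5 ≤ C ^ 5 := pow_le_pow_left₀ (by norm_num) hC2 5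
    rw [hB]; linarith
  have hBle : B ≤ n ^ (16 * η) := by
    have e : C ^ 5 = n ^ (15 * η) := by
      rw [hC, ← Real.rpow_natCast, ← Real.rpow_mul hn0.le]; congr 1; push_cast; ring
    have e2 : n ^ (16 * η) = n ^ η * n ^ (15 * η) := by rw [hadd]; congr 1; ring
    rw [hB, e, e2]
    gcongr
  have hlev := (lev_le hn0 (by linarith) hBle 12).2
  have hlev2 : 2 * lev B 12 ≤ n ^ (9 / 100 : ℝ) := by
    calc 2 * lev B 12 ≤ n ^ η * n ^ (16 * η * 4 ^ 12) := by
          have := (lev_le hn0 (by linarith) hBle 12).1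
          gcongr
      _ = n ^ (η + 16 * η * 4 ^ 12) := hadd _ _
      _ ≤ _ := by
          apply hexp
          linarith
  have hlevU : 2 * lev B 12 * U.card ≤ n ^ (112 / 100 : ℝ) := by
    calc 2 * lev B 12 * U.card ≤ n ^ (9 / 100 : ℝ) * n ^ (1 + 3 * η) := by gcongr
      _ = n ^ (9 / 100 + (1 + 3 * η)) := hadd _ _
      _ ≤ _ := by apply hexp; linarith
  have hXc2 : n ^ (3 / 10 : ℝ) ≤ X.card := by
    have h1 : n ^ (7 / 20 : ℝ) ≤ n ^ (4 * η) * X.card := by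
      refine (hΓc.trans hXc).trans ?_
      have e : n ^ (4 * η) = n ^ η * n ^ (3 * η) := by rw [hadd]; congr 1; ring
      rw [e]
      gcongr
    have h2 : n ^ (4 * η) * n ^ (3 / 10 : ℝ) ≤ n ^ (4 * η) * X.card := by
      refine le_trans ?_ h1
      rw [hadd]
      apply hexp; linarith
    exact le_of_mul_le_mul_left h2 (by positivity)
  have hX2 : 2 ≤ X.card := by
    have : (2:ℝ) ≤ X.card := (hn2.trans (hexp _ _ (by linarith))).trans hXc2
    exact_mod_cast this
  have hfin := pivot_twice hB27 hUne hg1 hgm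
    (hlev2.trans ((hexp _ _ (by linarith)).trans hUc))
    (lt_of_le_of_lt (hlevU.trans ((hexp _ (2:ℝ) (by norm_num)).trans
      (le_of_eq (Real.rpow_two n)))) hp) X hX hX2
  have h12 : n ^ (12 / 10 : ℝ) ≤ (X.card : ℝ) ^ 4 := by
    refine le_trans (le_of_eq ?_) (pow_le_pow_left₀ (by positivity) hXc2 4)
    rw [← Real.rpow_natCast, ← Real.rpow_mul hn0.le]; congr 1; norm_num
  have : n ^ (112 / 100 : ℝ) < n ^ (12 / 10 : ℝ) :=
    Real.rpow_lt_rpow_of_exponent_lt (by linarith) (by norm_num)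
  linarith

lemma exists_k (d : ℝ) (hd : 0 < d) : ∃ k : ℕ, 1 ≤ k ∧ 1 ≤ d * ((k : ℝ) - 1) := by
  obtain ⟨m, hm⟩ := exists_nat_ge (1 / d)
  refine ⟨m + 1, by omega, ?_⟩
  rw [div_le_iff₀ hd] at hm
  push_cast
  linarith

lemma ck_pos {k : ℕ} (hk : 1 ≤ k) : 0 < 1 / (10 * (4 * (k : ℝ) - 1)) := by
  have : (1:ℝ) ≤ k := by exact_mod_cast hk
  apply one_div_pos.2
  linarith

lemma core : ∃ c ηm : ℝ, ∃ K : ℕ, 0 < c ∧ 0 < ηm ∧ ∀ (p : ℕ) [Fact p.Prime],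
    ∀ A : Finset (ZMod p)ˣ, ∀ n : ℝ, (A.card : ℝ) = n → n ^ 2 < p → 2 ≤ n → 2 ≤ n ^ ηm →
    ∃ S ⊆ A, ((∀ u, u ≠ 1 → mulRep S u ≤ K) ∨
      ∀ u, u ≠ 0 → addRep (S.image (fun x : (ZMod p)ˣ => (x : ZMod p))) u ≤ K) ∧
      n ^ (1 / 2 + c) / 10 ≤ S.card := by
  classical
  obtain ⟨η, hη, hη1⟩ : ∃ η : ℝ, 0 < η ∧ η * (200 * 4 ^ 12) ≤ 1 :=
    ⟨1 / (200 * 4 ^ 12), by norm_num, by norm_num⟩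
  have hηs : η ≤ 1 / 100 := by norm_num at hη1; linarith
  obtain ⟨J, δ, hJ, hδ0, hδ, hδη, hδmono⟩ := exists_params η hη (by linarith)
  obtain ⟨k, hk, hdk⟩ := exists_k (δ 0) (hδ0 0)
  have hck := ck_pos hk
  set ca := 1 / (10 * (4 * (k : ℝ) - 1)) with hca
  have hd := hδ0 0
  obtain ⟨ηm, hηm, hm1, hm2, hm3, hm4⟩ : ∃ ηm : ℝ, 0 < ηm ∧ ηm ≤ 1 / 100 ∧ ηm ≤ ca / 2 ∧
      ηm ≤ η ∧ ηm * (6 * J + 5) ≤ δ 0 := by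
    have hJ0 : (0:ℝ) < 6 * J + 5 := by positivity
    refine ⟨min (min (1 / 100) (ca / 2)) (min η (δ 0 / (6 * J + 5))), ?_, ?_, ?_, ?_, ?_⟩
    · refine lt_min (lt_min (by norm_num) (by linarith)) (lt_min hη (by positivity))
    · exact (min_le_left _ _).trans (min_le_left _ _)
    · exact (min_le_left _ _).trans (min_le_right _ _)
    · exact (min_le_right _ _).trans (min_le_left _ _)
    · rw [← le_div_iff₀ hJ0]
      exact (min_le_right _ _).trans (min_le_right _ _)
  obtain ⟨J', δ', hJ', hδ0', hδ', hδη', hδmono'⟩ := exists_params ηm hηm (by linarith)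
  obtain ⟨k', hk', hdk'⟩ := exists_k (δ' 0) (hδ0' 0)
  have hck' := ck_pos hk'
  set cm := 1 / (10 * (4 * (k' : ℝ) - 1)) with hcm
  refine ⟨min ca cm, ηm, max (3 * k) (3 * k'), lt_min hck hck', hηm, ?_⟩
  intro p _ A n hA hp hn hn2
  have hn0 : 0 < n := by linarith
  have hn1 : 1 ≤ n := by linarith
  have hexp : ∀ a b : ℝ, a ≤ b → n ^ a ≤ n ^ b := fun a b h =>
    Real.rpow_le_rpow_of_exponent_le hn1 h
  have hadd : ∀ a b : ℝ, n ^ a * n ^ b = n ^ (a + b) := fun a b => (Real.rpow_add hn0 a b).symm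
  by_cases hcase : ((mulNear A (n ^ (1 - δ' 0))).card : ℝ) ≤ n ^ (2 / 5 : ℝ)
  · obtain ⟨S, hSA, hS, hSc⟩ := mul_sidon_final (δ' 0) k' hk' hdk' n hn1 A
      (by
        rw [hA]
        exact (hexp _ 1 (by rw [← hcm]; linarith)).trans (le_of_eq (Real.rpow_one n)))
      hA.le hcase
    refine ⟨S, hSA, Or.inl fun u hu => (hS u hu).trans (le_max_right _ _), le_trans ?_ hSc⟩
    have := hexp (1 / 2 + min ca cm) (1 / 2 + cm) (by linarith [min_le_right ca cm])
    rw [hcm] at this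
    linarith
  · rw [not_le] at hcase
    obtain ⟨A1, hA1, Γ, h1Γ, hA1c, hΓ, hgrow⟩ := stageM ηm hηm hm1 J' hJ' δ' hδ0' hδ' hδη' hδmono'
      n hn hn2 A hA
    set f : (ZMod p)ˣ → ZMod p := fun x => (x : ZMod p) with hf
    have hfi : Function.Injective f := Units.val_injective
    have hΓc : n ^ (7 / 20 : ℝ) ≤ (Γ.image f).card := by
      rw [card_image_of_injective _ hfi]
      have h1 : n ^ (2 * ηm) * n ^ (7 / 20 : ℝ) ≤ n ^ (2 * ηm) * Γ.card := by
        rw [hadd]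
        refine (hexp _ (2 / 5) (by linarith)).trans (hcase.le.trans hΓ)
      exact le_of_mul_le_mul_left h1 (by positivity)
    have hnear := stageA η hη hη1 J hJ δ hδ0 hδ hδη hδmono n hn (hn2.trans (hexp _ _ hm3)) hp
      (fun j => (A1 * Γ ^ j).image f) (Γ.image f)
      (by
        intro h
        obtain ⟨γ, _, h⟩ := mem_image.1 h
        exact γ.ne_zero h)
      (mem_image.2 ⟨1, h1Γ, Units.val_one⟩) hΓc
      (by
        intro j γ hγ x hx
        obtain ⟨g, hg, rfl⟩ := mem_image.1 hγ
        obtain ⟨y, hy, rfl⟩ := mem_image.1 hx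
        refine mem_image.2 ⟨y * g, ?_, ?_⟩
        · rw [pow_succ, ← mul_assoc]
          exact mul_mem_mul hy hg
        · simp only [hf, Units.val_mul]; ring)
      (by
        intro j hj
        rw [card_image_of_injective _ hfi]
        refine (hgrow j).trans (hexp _ _ ?_)
        have hjJ : (j : ℝ) ≤ J := by exact_mod_cast hj
        nlinarith)
      (by
        rw [card_image_of_injective _ hfi, pow_zero, mul_one]
        refine (hexp _ _ ?_).trans hA1c
        have : (0:ℝ) ≤ J := by positivity
        nlinarith)
    simp only [pow_zero, mul_one] at hnear
    have hA1n : (A1.card : ℝ) ≤ n := by rw [← hA]; exact_mod_cast card_le_card hA1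
    obtain ⟨S, hSA, hS, hSc⟩ := add_sidon_final (δ 0) k hk hdk n hn1 (A1.image f)
      (by
        rw [card_image_of_injective _ hfi, ← hca]
        exact (hexp _ _ (by linarith)).trans hA1c)
      (by rw [card_image_of_injective _ hfi]; exact hA1n) hnear
    obtain ⟨T, hT, rfl⟩ := subset_image_iff.1 hSA
    refine ⟨T, hT.trans hA1, Or.inr fun u hu => (hS u hu).trans (le_max_left _ _), ?_⟩
    rw [card_image_of_injective _ hfi] at hSc
    refine le_trans ?_ hSc
    have := hexp (1 / 2 + min ca cm) (1 / 2 + ca) (by linarith [min_le_left ca cm])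
    rw [hca] at this
    linarith

end SidonAux

namespace SidonAux
open Finset

lemma subPairCount_le {F : Type*} [AddCommGroup F] [DecidableEq F] (S : Finset F) (mu : F) :
    subPairCount mu S ≤ addRep S mu := by
  unfold subPairCount addRep
  refine le_trans ?_ (card_image_le (f := fun x => (x, x - mu)))
  rw [← Set.ncard_coe_finset]
  apply Set.ncard_le_ncard _ (Finset.finite_toSet _)
  rintro ⟨x, y⟩ ⟨hx, hy, h⟩
  simp only at hx hy h
  have e : x - mu = y := by rw [← h]; abel
  refine mem_coe.2 (mem_image.2 ⟨x, mem_filter.2 ⟨hx, ?_⟩, ?_⟩)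
  · rw [e]; exact hy
  · rw [e]

lemma mulPairCount_le {p : ℕ} [Fact p.Prime] (S : Finset (ZMod p)ˣ) (K : ℕ)
    (hS : ∀ u, u ≠ 1 → mulRep S u ≤ K) (lam : ZMod p) (hlam : lam ≠ 1) :
    mulPairCount lam (S.image (fun x : (ZMod p)ˣ => (x : ZMod p))) ≤ K := by
  by_cases h0 : lam = 0
  · subst h0
    have : mulPairCount (0 : ZMod p) (S.image (fun x : (ZMod p)ˣ => (x : ZMod p))) = 0 := by
      unfold mulPairCount
      refine (congrArg Set.ncard ?_).trans (Set.ncard_empty (ZMod p × ZMod p))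
      rw [Set.eq_empty_iff_forall_notMem]
      rintro ⟨x, y⟩ ⟨hx, hy, h⟩
      simp only [zero_mul] at hx h
      obtain ⟨u, _, hu⟩ := mem_image.1 hx
      exact u.ne_zero (hu.trans h)
    rw [this]; exact Nat.zero_le _
  · have hu1 : Units.mk0 lam h0 ≠ 1 := by
      intro h
      apply hlam
      have := congrArg Units.val h
      simpa using this
    refine le_trans ?_ (hS _ hu1)
    unfold mulPairCount mulRep
    refine le_trans ?_ (card_image_le (f := fun x : (ZMod p)ˣ =>
      ((x : ZMod p), ((x / Units.mk0 lam h0 : (ZMod p)ˣ) : ZMod p))))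
    rw [← Set.ncard_coe_finset]
    apply Set.ncard_le_ncard _ (Finset.finite_toSet _)
    rintro ⟨x, y⟩ ⟨hx, hy, h⟩
    simp only at hx hy h
    obtain ⟨u, hu, rfl⟩ := mem_image.1 hx
    obtain ⟨v, hv, rfl⟩ := mem_image.1 hy
    have e : u / Units.mk0 lam h0 = v := by
      rw [div_eq_iff_eq_mul]
      ext
      rw [h]; simp [mul_comm]
    refine mem_coe.2 (mem_image.2 ⟨u, mem_filter.2 ⟨hu, ?_⟩, ?_⟩)
    · rw [e]; exact hv
    · rw [e]

end SidonAux

theorem stmt12 :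
    ∃ c K c0 : ℝ, 0 < c ∧ 1 ≤ K ∧ 0 < c0 ∧
      ∀ (p : ℕ) [Fact p.Prime],
        ∀ A : Finset (ZMod p), (A.card : ℝ) < Real.sqrt p →
          ∃ S : Finset (ZMod p), S ⊆ A ∧ (IsAddSidon K S ∨ IsMulSidon K S) ∧
            c0 * (A.card : ℝ) ^ ((1 : ℝ) / 2 + c) ≤ S.card := by
  classical
  obtain ⟨c, ηm, K, hc, hηm, hcore⟩ := SidonAux.core
  set n0 : ℝ := max 2 (2 ^ (1 / ηm)) with hn0
  have hn02 : 2 ≤ n0 := le_max_left _ _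
  set M : ℝ := (2 * (n0 + 1)) ^ ((1 : ℝ) / 2 + c) with hM
  have hM0 : 0 < M := by positivity
  have hM1 : 1 ≤ M := Real.one_le_rpow (by linarith) (by positivity)
  refine ⟨c, K + 1, 1 / (10 * M), hc, by linarith [Nat.cast_nonneg (α := ℝ) K], by positivity, ?_⟩
  intro p _ A hA
  set f : (ZMod p)ˣ → ZMod p := fun x => (x : ZMod p) with hf
  have hfi : Function.Injective f := Units.val_injective
  set B : Finset (ZMod p)ˣ := Finset.univ.filter (fun u => f u ∈ A) with hB
  have hBA : B.image f ⊆ A := by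
    intro x hx
    obtain ⟨u, hu, rfl⟩ := Finset.mem_image.1 hx
    exact (Finset.mem_filter.1 hu).2
  have hAB : A ⊆ insert 0 (B.image f) := by
    intro x hx
    rw [Finset.mem_insert]
    by_cases h0 : x = 0
    · exact Or.inl h0
    · exact Or.inr (Finset.mem_image.2 ⟨Units.mk0 x h0, by simp [hB, hf, hx], by simp [hf]⟩)
  have hc1 : (B.card : ℝ) ≤ A.card := by
    have := Finset.card_le_card hBA
    rw [Finset.card_image_of_injective _ hfi] at this
    exact_mod_cast this
  have hc2 : (A.card : ℝ) ≤ B.card + 1 := by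
    have := (Finset.card_le_card hAB).trans (Finset.card_insert_le _ _)
    rw [Finset.card_image_of_injective _ hfi] at this
    exact_mod_cast this
  by_cases hbig : n0 ≤ (B.card : ℝ)
  · have hp : (B.card : ℝ) ^ 2 < p := by
      have h1 : (B.card : ℝ) < Real.sqrt p := lt_of_le_of_lt hc1 hA
      have := (Real.lt_sqrt (Nat.cast_nonneg _)).1 h1
      exact this
    have hn2 : (2:ℝ) ≤ (B.card : ℝ) ^ ηm := by
      calc (2:ℝ) = (2 ^ (1 / ηm)) ^ ηm := by
            rw [← Real.rpow_mul (by norm_num), one_div_mul_cancel hηm.ne', Real.rpow_one]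
        _ ≤ _ := by
            apply Real.rpow_le_rpow (by positivity) _ hηm.le
            exact (le_max_right _ _).trans hbig
    obtain ⟨S, hSB, hS, hSc⟩ := hcore p B _ rfl hp (hn02.trans hbig) hn2
    refine ⟨S.image f, (Finset.image_subset_image hSB).trans hBA, ?_, ?_⟩
    · rcases hS with hS | hS
      · right
        intro lam hlam
        have := SidonAux.mulPairCount_le S K hS lam hlam
        have h2 : (mulPairCount lam (S.image f) : ℝ) ≤ K := by exact_mod_cast this
        linarith
      · left
        intro mu hmu
        have := (SidonAux.subPairCount_le (S.image f) mu).trans (hS mu hmu)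
        have h2 : (subPairCount mu (S.image f) : ℝ) ≤ K := by exact_mod_cast this
        linarith
    · rw [Finset.card_image_of_injective _ hfi]
      refine le_trans ?_ hSc
      have h1 : (A.card : ℝ) ^ ((1 : ℝ) / 2 + c) ≤ M * (B.card : ℝ) ^ ((1 : ℝ) / 2 + c) := by
        rw [hM, ← Real.mul_rpow (by positivity) (by positivity)]
        apply Real.rpow_le_rpow (by positivity) _ (by positivity)
        nlinarith
      calc 1 / (10 * M) * (A.card : ℝ) ^ ((1 : ℝ) / 2 + c)
          ≤ 1 / (10 * M) * (M * (B.card : ℝ) ^ ((1 : ℝ) / 2 + c)) := by gcongr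
        _ = _ := by field_simp
  · rw [not_le] at hbig
    rcases A.eq_empty_or_nonempty with h | ⟨a, ha⟩
    · refine ⟨∅, by simp, Or.inl ?_, ?_⟩
      · intro mu _
        simp only [subPairCount, Finset.notMem_empty, false_and, Set.ofPred_false, Set.ncard_empty]
        push_cast
        positivity
      · rw [h, Finset.card_empty, Nat.cast_zero, Real.zero_rpow (by positivity), mul_zero]
    · refine ⟨{a}, by simpa using ha, Or.inl ?_, ?_⟩
      · intro mu hmu
        have := (SidonAux.subPairCount_le {a} mu).trans (SidonAux.addRep_le {a} mu)
        rw [Finset.card_singleton] at this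
        have h2 : (subPairCount mu ({a} : Finset (ZMod p)) : ℝ) ≤ 1 := by exact_mod_cast this
        linarith [Nat.cast_nonneg (α := ℝ) K]
      · rw [Finset.card_singleton, Nat.cast_one]
        have h1 : (A.card : ℝ) ^ ((1 : ℝ) / 2 + c) ≤ M := by
          apply Real.rpow_le_rpow (by positivity) _ (by positivity)
          linarith
        calc 1 / (10 * M) * (A.card : ℝ) ^ ((1 : ℝ) / 2 + c) ≤ 1 / (10 * M) * M := by gcongr
          _ = 1 / 10 := by field_simp
          _ ≤ 1 := by norm_num
end

section
/- Let G be an abelian group, let B, C ⊆ G be finite nonempty sets, let A = B + C, and let k ≥ 1 be an integer. Then Sid_k(A) ≤ min{ |C|·sqrt(k·|B|) + |B|, |B|·sqrt(k·|C|) + |C| }. -/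
open scoped BigOperators Pointwise

/-- `r_{S-S}(x)`: the number of pairs `(a, a') ∈ S × S` with `a - a' = x`. -/
noncomputable def rsub {G : Type*} [AddCommGroup G] (S : Finset G) (x : G) : ℕ :=
  Set.ncard {q : G × G | q.1 ∈ S ∧ q.2 ∈ S ∧ q.1 - q.2 = x}

/-- `S` is `g`-Sidon: every nonzero `z` has at most `g` representations `x - y`
with `x, y ∈ S`. -/
def IsSidon {G : Type*} [AddCommGroup G] (g : ℕ) (S : Finset G) : Prop :=
  ∀ z : G, z ≠ 0 → rsub S z ≤ g

theorem sidon_fiber_bound {G : Type*} [AddCommGroup G] [DecidableEq G]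
    (C : Finset G) (k : ℕ) (S : Finset G) (hSid : IsSidon k S)
    (b c : G → G) (hc : ∀ s ∈ S, c s ∈ C) (hs : ∀ s ∈ S, b s + c s = s) :
    ((S ×ˢ S).filter (fun q => b q.1 = b q.2)).card ≤ S.card + k * C.card ^ 2 := by
  have h1 : (S ×ˢ S).filter (fun q => b q.1 = b q.2) ⊆
      S.diag ∪ S.offDiag.filter (fun q => b q.1 = b q.2) := by
    intro q hq
    simp only [Finset.mem_filter, Finset.mem_product, Finset.mem_union, Finset.mem_diag,
      Finset.mem_offDiag] at hq ⊢
    tauto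
  have h2 : (S.offDiag.filter (fun q => b q.1 = b q.2)).card ≤ k * (C ×ˢ C).card := by
    apply Finset.card_le_mul_card_image_of_maps_to (f := fun q : G × G => (c q.1, c q.2))
    · intro q hq
      simp only [Finset.mem_filter, Finset.mem_offDiag] at hq
      simp only [Finset.mem_product]
      exact ⟨hc _ hq.1.1, hc _ hq.1.2.1⟩
    · rintro ⟨u, v⟩ -
      by_cases huv : u = v
      · subst huv
        rw [Finset.card_eq_zero.2]
        · exact Nat.zero_le _
        · apply Finset.eq_empty_of_forall_notMem
          intro q hq
          simp only [Finset.mem_filter, Finset.mem_offDiag, Prod.mk.injEq] at hq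
          obtain ⟨⟨⟨ha, hb, hne⟩, hbb⟩, hu, hv⟩ := hq
          apply hne
          rw [← hs _ ha, ← hs _ hb, hbb, hu, hv]
      · refine le_trans ?_ (hSid (u - v) (sub_ne_zero.2 huv))
        unfold rsub
        rw [← Set.ncard_coe_finset]
        apply Set.ncard_le_ncard
        · intro q hq
          simp only [Finset.coe_filter, Finset.mem_filter, Finset.mem_offDiag, Prod.mk.injEq,
            Set.mem_setOf_eq] at hq ⊢
          obtain ⟨⟨⟨ha, hb, hne⟩, hbb⟩, hu, hv⟩ := hq
          refine ⟨ha, hb, ?_⟩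
          have e1 := hs _ ha
          have e2 := hs _ hb
          rw [← e1, ← e2, hbb, hu, hv]
          abel
        · apply (S ×ˢ S).finite_toSet.subset
          intro q hq
          simp only [Finset.coe_product, Set.mem_prod, Finset.mem_coe]
          exact ⟨hq.1, hq.2.1⟩
  calc _ ≤ _ := Finset.card_le_card h1
    _ ≤ _ := Finset.card_union_le _ _
    _ ≤ _ := by
      rw [Finset.diag_card, sq, ← Finset.card_product]
      exact Nat.add_le_add_left h2 _

theorem sidon_half {G : Type*} [AddCommGroup G] [DecidableEq G]
    (B C : Finset G) (k : ℕ)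
    (S : Finset G) (hS : S ⊆ B + C) (hSid : IsSidon k S) :
    (S.card : ℝ) ≤ (C.card : ℝ) * Real.sqrt ((k : ℝ) * B.card) + B.card := by
  have hex : ∀ s : G, ∃ p : G × G, s ∈ S → p.1 ∈ B ∧ p.2 ∈ C ∧ p.1 + p.2 = s := by
    intro s
    by_cases h : s ∈ S
    · obtain ⟨x, hx, y, hy, e⟩ := Finset.mem_add.1 (hS h)
      exact ⟨(x, y), fun _ => ⟨hx, hy, e⟩⟩
    · exact ⟨(0, 0), fun h' => absurd h' h⟩
  choose p hp using hex
  have hmain := sidon_fiber_bound C k S hSid (fun s => (p s).1) (fun s => (p s).2)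
    (fun s h => (hp s h).2.1) (fun s h => (hp s h).2.2)
  have hcs : S.card ^ 2 ≤
      B.card * ((S ×ˢ S).filter (fun q => (p q.1).1 = (p q.2).1)).card := by
    have e1 : S.card = ∑ x ∈ B, (S.filter (fun s => (p s).1 = x)).card :=
      Finset.card_eq_sum_card_fiberwise (fun s h => (hp s h).1)
    have e2 : ((S ×ˢ S).filter (fun q => (p q.1).1 = (p q.2).1)).card =
        ∑ x ∈ B, (S.filter (fun s => (p s).1 = x)).card ^ 2 := by
      rw [Finset.card_eq_sum_card_fiberwise (f := fun q : G × G => (p q.1).1) (t := B)]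
      · apply Finset.sum_congr rfl
        intro x _
        rw [sq, ← Finset.card_product]
        congr 1
        ext q
        simp only [Finset.mem_filter, Finset.mem_product]
        constructor
        · rintro ⟨⟨⟨h1, h2⟩, h3⟩, h4⟩
          exact ⟨⟨h1, h4⟩, h2, h3 ▸ h4⟩
        · rintro ⟨⟨h1, h4⟩, h2, h3⟩
          exact ⟨⟨⟨h1, h2⟩, h4.trans h3.symm⟩, h4⟩
      · intro q hq
        simp only [Finset.coe_filter, Finset.mem_product, Set.mem_setOf_eq] at hq
        exact (hp _ hq.1.1).1
    rw [e2]
    conv_lhs => rw [e1]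
    exact sq_sum_le_card_mul_sum_sq
  have h3 : S.card ^ 2 ≤ B.card * (S.card + k * C.card ^ 2) :=
    hcs.trans (Nat.mul_le_mul_left _ hmain)
  have h4 : (S.card : ℝ) ^ 2 ≤ B.card * (S.card + k * (C.card : ℝ) ^ 2) := by exact_mod_cast h3
  have hr : Real.sqrt ((k : ℝ) * B.card) ^ 2 = k * B.card := Real.sq_sqrt (by positivity)
  have hX : 0 ≤ (C.card : ℝ) * Real.sqrt ((k : ℝ) * B.card) := by positivity
  have hX2 : ((C.card : ℝ) * Real.sqrt ((k : ℝ) * B.card)) ^ 2 = C.card ^ 2 * (k * B.card) := by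
    rw [mul_pow, hr]
  generalize (C.card : ℝ) * Real.sqrt ((k : ℝ) * B.card) = X at *
  have hb : (0 : ℝ) ≤ B.card := by positivity
  by_contra! hlt
  nlinarith

theorem stmt14 {G : Type*} [AddCommGroup G] [DecidableEq G]
    (B C : Finset G) (hB : B.Nonempty) (hC : C.Nonempty)
    (A : Finset G) (hA : A = B + C) (k : ℕ) (hk : 1 ≤ k)
    (S : Finset G) (hS : S ⊆ A) (hSid : IsSidon k S) :
    (S.card : ℝ) ≤
      min ((C.card : ℝ) * Real.sqrt ((k : ℝ) * B.card) + B.card)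
        ((B.card : ℝ) * Real.sqrt ((k : ℝ) * C.card) + C.card) := by
  subst hA
  exact le_min (sidon_half B C k S hS hSid)
    (sidon_half C B k S (by rwa [add_comm C B]) hSid)
end

section
/- Let G be a group, let k ≥ 2 be an even integer, and let f_1, …, f_{2k} : G → ℝ_{≥0} be finitely supported nonnegative functions. Then T_k(f_1, …, f_{2k})^{2k} ≤ Π_{j=1}^{2k} T_k(f_j, …, f_j). -/
open scoped BigOperators

/-- Alternating product `g 0 * (g 1)⁻¹ * g 2 * (g 3)⁻¹ * ⋯` of a tuple in a group. -/
def altp {G : Type*} [Group G] (m : ℕ) (g : Fin m → G) : G :=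
  (((List.finRange m).map (fun i : Fin m => if (i : ℕ) % 2 = 0 then g i else (g i)⁻¹)).prod)

/-- `Tfun k F` is the sum of `Π_j F j (a_j)` over all `2k`-tuples `a ∈ G^{2k}` with
`a_1 a_2⁻¹ ⋯ a_{k-1} a_k⁻¹ = a_{k+1} a_{k+2}⁻¹ ⋯ a_{2k-1} a_{2k}⁻¹` (for even `k`). -/
noncomputable def Tfun {G : Type*} [Group G] (k : ℕ) (F : Fin (2 * k) → G → ℝ) : ℝ :=
  ∑' a : {a : Fin (2 * k) → G //
      altp k (fun i : Fin k => a ⟨i.val, by have := i.isLt; omega⟩) =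
        altp k (fun i : Fin k => a ⟨k + i.val, by have := i.isLt; omega⟩)},
    ∏ j : Fin (2 * k), F j (a.val j)

namespace Chess

/-- Rotation by a whole block, with some sign. -/
lemma rot {ι : Type*} (n : ℕ) (W : Bool → List ι → ℝ)
    (hrot : ∀ b i l, (i :: l).length = n → W b (i :: l) = W (!b) (l ++ [i])) :
    ∀ (p q : List ι) (b : Bool), (p ++ q).length = n → ∃ c, W b (p ++ q) = W c (q ++ p) := by
  intro p
  induction p with
  | nil => intro q b _; exact ⟨b, by simp⟩
  | cons i p ih =>
    intro q b h
    obtain ⟨c, hc⟩ := ih (q ++ [i]) (!b) (by simp at h ⊢; omega)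
    refine ⟨c, ?_⟩
    have := hrot b i (p ++ q) (by simpa using h)
    simp only [List.cons_append, this]
    simpa using hc

/-- The chessboard estimate, abstract form. -/
lemma chess {ι : Type*} [Finite ι] (k : ℕ) (hk : 1 ≤ k) (W : Bool → List ι → ℝ)
    (hnn : ∀ b l, 0 ≤ W b l)
    (hrot : ∀ b i l, (i :: l).length = 2 * k → W b (i :: l) = W (!b) (l ++ [i]))
    (hcs : ∀ b l m, l.length = k → m.length = k →
      W b (l ++ m) ^ 2 ≤ W b (l ++ l.reverse) * W b (m.reverse ++ m))
    (hone : ∀ b i, W b (List.replicate (2 * k) i) ≤ 1)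
    (b : Bool) (l : List ι) (hl : l.length = 2 * k) : W b l ≤ 1 := by
  by_contra hcon
  push Not at hcon
  have hfin : Finite {l : List ι // l.length = 2 * k} := List.finite_length_eq ι (2 * k)
  have : Nonempty (Bool × {l : List ι // l.length = 2 * k}) := ⟨(b, ⟨l, hl⟩)⟩
  obtain ⟨⟨b0, l0, hl0⟩, hmax⟩ := Finite.exists_max
    (fun x : Bool × {l : List ι // l.length = 2 * k} => W x.1 x.2.1)
  set M := W b0 l0 with hM
  have hmax' : ∀ c m, m.length = 2 * k → W c m ≤ M := fun c m h => hmax (c, ⟨m, h⟩)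
  have hM1 : 1 < M := lt_of_lt_of_le hcon (hmax' b l hl)
  have hrefl : ∀ c l m, l.length = k → m.length = k → W c (l ++ m) = M →
      W c (l ++ l.reverse) = M := by
    intro c l m h1 h2 h3
    have h := hcs c l m h1 h2
    have ha := hmax' c (l ++ l.reverse) (by simp; omega)
    have hb := hmax' c (m.reverse ++ m) (by simp; omega)
    have h0 := hnn c (l ++ l.reverse)
    rw [h3] at h
    refine le_antisymm ha ?_
    nlinarith
  have key : ∀ r, 1 ≤ r → r ≤ k → ∃ c i t, (List.replicate r i ++ t).length = 2 * k ∧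
      W c (List.replicate r i ++ t) = M := by
    intro r hr
    induction r, hr using Nat.le_induction with
    | base =>
      intro _
      cases l0 with
      | nil => simp at hl0; omega
      | cons i t => exact ⟨b0, i, t, by simpa using hl0, by simp [hM]⟩
    | succ r hr ih =>
      intro hrk
      obtain ⟨c, i, t, hlen, hW⟩ := ih (by omega)
      have hlen' : r + t.length = 2 * k := by simpa using hlen
      -- split t = m ++ p with |p| = k - r, |m| = k
      have ht : t = t.take k ++ t.drop k := (List.take_append_drop k t).symm
      set m := t.take k with hm
      set p := t.drop k with hp
      have hml : m.length = k := by simp [hm]; omega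
      have hpl : p.length = k - r := by simp [hp]; omega
      obtain ⟨d, hd⟩ := rot (2 * k) W hrot (List.replicate r i ++ m) p c
        (by simp [hml, hpl]; omega)
      have h1 : W d ((p ++ List.replicate r i) ++ m) = M := by
        rw [← hW, ht, ← List.append_assoc, hd]; simp
      have h2 := hrefl d _ _ (by simp [hpl]; omega) hml h1
      obtain ⟨e, he⟩ := rot (2 * k) W hrot p
        (List.replicate r i ++ (List.replicate r i ++ p.reverse)) d
        (by simp [hpl]; omega)
      obtain ⟨s, rfl⟩ : ∃ s, r = s + 1 := ⟨r - 1, by omega⟩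
      refine ⟨e, i, List.replicate s i ++ (p.reverse ++ p), ?_, ?_⟩
      · simp [hpl]; omega
      · rw [← h2]
        have e1 : (p ++ List.replicate (s + 1) i) ++ (p ++ List.replicate (s + 1) i).reverse =
          p ++ (List.replicate (s + 1) i ++ (List.replicate (s + 1) i ++ p.reverse)) := by simp
        rw [e1, he]
        congr 1
        simp only [← List.append_assoc, List.replicate_append_replicate]
        congr 3
        omega
  obtain ⟨c, i, t, hlen, hW⟩ := key k hk le_rfl
  have h := hrefl c _ t (by simp) (by simp at hlen; omega) hW
  have h1 := hone c i
  rw [List.reverse_replicate, List.replicate_append_replicate, ← two_mul] at h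
  linarith

open MonoidAlgebra

variable {G : Type*} [Group G]

/-- The involution on the group algebra. -/
noncomputable def st (x : MonoidAlgebra ℝ G) : MonoidAlgebra ℝ G :=
  MonoidAlgebra.mapDomain (fun g => g⁻¹) x

lemma st_add (x y : MonoidAlgebra ℝ G) : st (x + y) = st x + st y := mapDomain_add _ _ _

lemma st_zero : st (0 : MonoidAlgebra ℝ G) = 0 := by simp [st]

lemma st_single (g : G) (r : ℝ) : st (single g r) = single g⁻¹ r := by simp [st]

lemma st_one : st (1 : MonoidAlgebra ℝ G) = 1 := by simp [one_def, st_single]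

lemma st_st (x : MonoidAlgebra ℝ G) : st (st x) = x := by
  induction x using MonoidAlgebra.induction_linear with
  | zero => simp [st_zero]
  | add x y hx hy => simp [st_add, hx, hy]
  | single g r => simp [st_single]

lemma st_mul (x y : MonoidAlgebra ℝ G) : st (x * y) = st y * st x := by
  induction x using MonoidAlgebra.induction_linear with
  | zero => simp [st_zero]
  | add x x' hx hy => simp [st_add, hx, hy, add_mul, mul_add]
  | single g r =>
    induction y using MonoidAlgebra.induction_linear with
    | zero => simp [st_zero]
    | add x x' hx hy => simp [st_add, hx, hy, add_mul, mul_add]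
    | single h s => simp [st_single, single_mul_single, mul_comm]

/-- The trace. -/
noncomputable def tr (x : MonoidAlgebra ℝ G) : ℝ := x.coeff 1

lemma tr_add (x y : MonoidAlgebra ℝ G) : tr (x + y) = tr x + tr y := by simp [tr]

lemma tr_zero : tr (0 : MonoidAlgebra ℝ G) = 0 := by simp [tr]

open Classical in
lemma tr_single (g : G) (r : ℝ) : tr (single g r) = if g = 1 then r else 0 := by
  simp [tr, Finsupp.single_apply]

lemma tr_comm (x y : MonoidAlgebra ℝ G) : tr (x * y) = tr (y * x) := by
  induction x using MonoidAlgebra.induction_linear with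
  | zero => simp
  | add x x' hx hy => simp [tr_add, hx, hy, add_mul, mul_add]
  | single g r =>
    induction y using MonoidAlgebra.induction_linear with
    | zero => simp
    | add x x' hx hy => simp [tr_add, hx, hy, add_mul, mul_add]
    | single h s =>
      simp only [single_mul_single, tr_single, mul_comm s r]
      congr 1
      rw [mul_eq_one_iff_eq_inv, mul_eq_one_iff_inv_eq, eq_comm (a := g)]

lemma tr_mul_st (x y : MonoidAlgebra ℝ G) (S : Finset G) (hx : x.coeff.support ⊆ S) :
    tr (x * st y) = ∑ g ∈ S, x.coeff g * y.coeff g := by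
  classical
  induction y using MonoidAlgebra.induction_linear with
  | zero => simp [st_zero, tr_zero]
  | add y y' hy hy' => simp [st_add, mul_add, tr_add, hy, hy', Finset.sum_add_distrib]
  | single h s =>
    have : h ∉ S → x.coeff h = 0 := fun hh => by
      by_contra h0
      exact hh (hx (Finsupp.mem_support_iff.mpr h0))
    simp [st_single, tr, coeff_mul_single_apply, Finsupp.single_apply]
    tauto

lemma cs (x y : MonoidAlgebra ℝ G) :
    tr (x * y) ^ 2 ≤ tr (x * st x) * tr (st y * y) := by
  classical
  rw [tr_comm (st y)]
  obtain ⟨z, rfl⟩ : ∃ z, y = st z := ⟨st y, (st_st y).symm⟩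
  rw [st_st, tr_comm _ z]
  rw [tr_mul_st x z (x.coeff.support ∪ z.coeff.support) Finset.subset_union_left,
    tr_mul_st x x (x.coeff.support ∪ z.coeff.support) Finset.subset_union_left,
    tr_mul_st z z (x.coeff.support ∪ z.coeff.support) Finset.subset_union_right]
  simpa only [sq] using Finset.sum_mul_sq_le_sq_mul_sq _ _ _

/-- Alternating words. -/
noncomputable def P {ι : Type*} (u : ι → MonoidAlgebra ℝ G) : Bool → List ι → MonoidAlgebra ℝ G
  | _, [] => 1
  | true, i :: l => u i * P u false l
  | false, i :: l => st (u i) * P u true l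

/-- One signed letter. -/
noncomputable def U {ι : Type*} (u : ι → MonoidAlgebra ℝ G) (b : Bool) (i : ι) :
    MonoidAlgebra ℝ G := if b then u i else st (u i)

variable {ι : Type*} (u : ι → MonoidAlgebra ℝ G)

lemma P_nil (b : Bool) : P u b [] = 1 := by cases b <;> rfl

lemma P_cons (b : Bool) (i : ι) (l : List ι) : P u b (i :: l) = U u b i * P u (!b) l := by
  cases b <;> simp [P, U]

lemma st_U (b : Bool) (i : ι) : st (U u b i) = U u (!b) i := by
  cases b <;> simp [U, st_st]

lemma P_append (b : Bool) (l m : List ι) :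
    P u b (l ++ m) = P u b l * P u (if l.length % 2 = 0 then b else !b) m := by
  induction l generalizing b with
  | nil => simp [P_nil]
  | cons i l ih =>
    rw [List.cons_append, P_cons, ih, P_cons, mul_assoc, List.length_cons]
    congr 3
    rcases Nat.mod_two_eq_zero_or_one l.length with h | h <;> simp [Nat.add_mod, h]

lemma st_P (b : Bool) (l : List ι) :
    st (P u b l) = P u (if l.length % 2 = 0 then b else !b) l.reverse := by
  induction l generalizing b with
  | nil => simp [P_nil, st_one]
  | cons i l ih =>
    rw [P_cons, st_mul, ih, List.reverse_cons, P_append, P_cons, P_nil, mul_one, st_U,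
      List.length_cons, List.length_reverse]
    rcases Nat.mod_two_eq_zero_or_one l.length with h | h <;> simp [Nat.add_mod, h]

lemma tr_rot (b : Bool) (i : ι) (l : List ι) (h : (i :: l).length % 2 = 0) :
    tr (P u b (i :: l)) = tr (P u (!b) (l ++ [i])) := by
  have h' : l.length % 2 = 1 := by simp at h; omega
  rw [P_cons, tr_comm, P_append, P_cons, P_nil, h']
  simp

lemma tr_cs (b : Bool) (l m : List ι) (hl : l.length % 2 = 0) (hm : m.length % 2 = 0) :
    tr (P u b (l ++ m)) ^ 2 ≤ tr (P u b (l ++ l.reverse)) * tr (P u b (m.reverse ++ m)) := by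
  have h := cs (P u b l) (P u b m)
  simpa [P_append, st_P, hl, hm] using h

/-- Noncommutative Hölder inequality for the trace on the group algebra. -/
lemma holder [Finite ι] (k : ℕ) (hk : 1 ≤ k) (hke : Even k)
    (hpos : ∀ i, 0 < tr (P u true (List.replicate (2 * k) i)))
    (l : List ι) (hl : l.length = 2 * k) :
    tr (P u true l) ^ (2 * k) ≤ (l.map fun i => tr (P u true (List.replicate (2 * k) i))).prod := by
  set N : ι → ℝ := fun i => tr (P u true (List.replicate (2 * k) i)) with hN
  have hNp : ∀ l : List ι, 0 < (l.map N).prod := by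
    intro l
    induction l with
    | nil => simp
    | cons i l ih => simpa using mul_pos (hpos i) ih
  have hNf : ∀ b i, tr (P u b (List.replicate (2 * k) i)) = N i := by
    intro b i
    cases b
    · obtain ⟨n, hn⟩ : ∃ n, 2 * k = n + 1 := ⟨2 * k - 1, by omega⟩
      rw [hn, List.replicate_succ, tr_rot _ _ _ _ (by simp; omega), ← List.replicate_succ', ← hn]
      rfl
    · rfl
  have hk2 : k % 2 = 0 := Nat.even_iff.mp hke
  have h := chess (ι := ι) k hk (fun b l => tr (P u b l) ^ (2 * k) / (l.map N).prod)
    (fun b l => div_nonneg ((even_two_mul k).pow_nonneg _) (hNp l).le)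
    (by
      intro b i l h
      rw [tr_rot _ _ _ _ (by omega)]
      simp [mul_comm])
    (by
      intro b l m hl hm
      rw [div_pow, div_mul_div_comm]
      have e : ((l ++ l.reverse).map N).prod * ((m.reverse ++ m).map N).prod
          = ((l ++ m).map N).prod ^ 2 := by
        simp [List.prod_reverse]
        ring
      rw [e]
      refine div_le_div_of_nonneg_right ?_ (sq_nonneg _)
      rw [← mul_pow, ← pow_mul, mul_comm (2 * k) 2, pow_mul]
      exact pow_le_pow_left₀ (sq_nonneg _) (tr_cs u b l m (by omega) (by omega)) _)
    (by
      intro b i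
      rw [hNf]
      simp only [List.map_replicate, List.prod_replicate]
      exact div_self_le_one _)
    true l hl
  simpa using (div_le_one (hNp l)).mp h

lemma altp_succ (m : ℕ) (g : Fin (m + 1) → G) :
    altp (m + 1) g = altp m (fun i => g i.castSucc) *
      (if m % 2 = 0 then g (Fin.last m) else (g (Fin.last m))⁻¹) := by
  simp [altp, List.finRange_succ_last, Function.comp_def]

lemma st_sum {α : Type*} (s : Finset α) (x : α → MonoidAlgebra ℝ G) :
    st (∑ a ∈ s, x a) = ∑ a ∈ s, st (x a) :=
  map_sum (AddMonoidHom.mk' (st (G := G)) st_add) _ _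

lemma tr_sum {α : Type*} (s : Finset α) (x : α → MonoidAlgebra ℝ G) :
    tr (∑ a ∈ s, x a) = ∑ a ∈ s, tr (x a) :=
  map_sum (AddMonoidHom.mk' (tr (G := G)) tr_add) _ _

/-- The group algebra element attached to a function, restricted to a finite set. -/
noncomputable def el (S : Finset G) (f : ι → G → ℝ) (i : ι) : MonoidAlgebra ℝ G :=
  ∑ a : S, single (a : G) (f i a)

lemma U_el (S : Finset G) (f : ι → G → ℝ) (i : ι) (b : Bool) :
    U (el S f) b i = ∑ a : S, single (if b then (a : G) else (a : G)⁻¹) (f i a) := by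
  cases b
  · simp only [U, el, st_sum, st_single]; rfl
  · rfl

lemma P_expand (S : Finset G) (f : ι → G → ℝ) (m : ℕ) (σ : Fin m → ι) :
    P (el S f) true (List.ofFn σ) = ∑ a : Fin m → S,
      single (altp m (fun i => (a i : G))) (∏ i, f (σ i) (a i)) := by
  induction m with
  | zero => simp [P_nil, altp, one_def]
  | succ m ih =>
    rw [List.ofFn_succ_last, P_append, ih, P_cons, P_nil, mul_one, U_el, List.length_ofFn,
      ← (Fin.snocEquiv (fun _ => (S : Type _))).sum_comp, Fintype.sum_prod_type_right,
      Finset.sum_mul]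
    refine Finset.sum_congr rfl fun a _ => ?_
    rw [Finset.mul_sum]
    refine Finset.sum_congr rfl fun x _ => ?_
    rw [single_mul_single, altp_succ, Fin.prod_univ_castSucc]
    simp only [Fin.snocEquiv, Equiv.coe_fn_mk, Fin.snoc_castSucc, Fin.snoc_last]
    by_cases h : m % 2 = 0 <;> simp [h]

open Classical in
lemma Tfun_eq_sum (S : Finset G) (k : ℕ) (F : Fin (2 * k) → G → ℝ)
    (hS : ∀ j x, F j x ≠ 0 → x ∈ S) :
    Tfun k F = ∑ a : Fin k → S, ∑ b : Fin k → S,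
      if altp k (fun i => (a i : G)) = altp k (fun i => (b i : G)) then
        (∏ i : Fin k, F ⟨i.val, by have := i.isLt; omega⟩ (a i)) *
        (∏ i : Fin k, F ⟨k + i.val, by have := i.isLt; omega⟩ (b i)) else 0 := by
  have hprod : ∀ f : Fin (2 * k) → ℝ, ∏ j, f j =
      (∏ i : Fin k, f ⟨i.val, by have := i.isLt; omega⟩) *
      (∏ i : Fin k, f ⟨k + i.val, by have := i.isLt; omega⟩) := by
    intro f
    rw [← (finCongr (two_mul k).symm).prod_comp, Fin.prod_univ_add]
    rfl
  unfold Tfun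
  refine (tsum_subtype {a : Fin (2 * k) → G |
      altp k (fun i : Fin k => a ⟨i.val, by have := i.isLt; omega⟩) =
        altp k (fun i : Fin k => a ⟨k + i.val, by have := i.isLt; omega⟩)}
      (fun a => ∏ j : Fin (2 * k), F j (a j))).trans ?_
  let g : (Fin k → S) × (Fin k → S) → (Fin (2 * k) → G) := fun p j =>
    if h : j.val < k then p.1 ⟨j.val, h⟩ else p.2 ⟨j.val - k, by have := j.isLt; omega⟩
  have g1 : ∀ p (i : Fin k), g p ⟨i.val, by have := i.isLt; omega⟩ = p.1 i := by
    intro p i; simp [g]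
  have g2 : ∀ p (i : Fin k), g p ⟨k + i.val, by have := i.isLt; omega⟩ = p.2 i := by
    intro p i; simp [g]
  have hg : Function.Injective g := by
    intro p q h
    refine Prod.ext (funext fun i => Subtype.ext ?_) (funext fun i => Subtype.ext ?_)
    · rw [← g1, ← g1, h]
    · rw [← g2, ← g2, h]
  rw [← hg.tsum_eq, tsum_fintype, Fintype.sum_prod_type]
  · refine Finset.sum_congr rfl fun a _ => Finset.sum_congr rfl fun b _ => ?_
    rw [Set.indicator_apply, hprod]
    simp only [Set.mem_ofPred_eq, g1, g2]
  · intro a ha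
    have ha' : ∏ j : Fin (2 * k), F j (a j) ≠ 0 := by
      intro h0
      apply ha
      simp [Set.indicator_apply, h0]
    have hmem : ∀ j, a j ∈ S := fun j => hS j _ (Finset.prod_ne_zero_iff.mp ha' j (Finset.mem_univ j))
    refine ⟨(fun i => ⟨a ⟨i.val, by have := i.isLt; omega⟩, hmem _⟩,
      fun i => ⟨a ⟨k + i.val, by have := i.isLt; omega⟩, hmem _⟩), ?_⟩
    funext j
    by_cases h : j.val < k
    · simp [g, h]
    · simp only [g, h, dite_false]
      congr 1
      ext
      simp
      omega

lemma Tfun_eq_tr (S : Finset G) (k : ℕ) (hke : Even k) (f : ι → G → ℝ) (σ : Fin (2 * k) → ι)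
    (hS : ∀ j x, f j x ≠ 0 → x ∈ S) :
    Tfun k (fun j => f (σ j)) = tr (P (el S f) true
      (List.ofFn (fun i : Fin k => σ ⟨i.val, by have := i.isLt; omega⟩) ++
        (List.ofFn (fun i : Fin k => σ ⟨k + i.val, by have := i.isLt; omega⟩)).reverse)) := by
  classical
  have hk2 : k % 2 = 0 := Nat.even_iff.mp hke
  have h1 := st_P (el S f) true
    (List.ofFn (fun i : Fin k => σ ⟨k + i.val, by have := i.isLt; omega⟩))
  rw [List.length_ofFn, if_pos hk2] at h1
  rw [P_append, List.length_ofFn, if_pos hk2, ← h1, P_expand, P_expand, st_sum, Finset.sum_mul,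
    tr_sum, Tfun_eq_sum S k _ (fun j => hS (σ j))]
  refine Finset.sum_congr rfl fun a _ => ?_
  rw [Finset.mul_sum, tr_sum]
  refine Finset.sum_congr rfl fun b _ => ?_
  rw [st_single, single_mul_single, tr_single]
  simp only [mul_inv_eq_one]

lemma Tfun_pos (S : Finset G) (k : ℕ) (f : G → ℝ) (hnn : ∀ x, 0 ≤ f x)
    (hS : ∀ x, f x ≠ 0 → x ∈ S) (x : G) (hx : f x ≠ 0) :
    0 < Tfun k (fun _ => f) := by
  classical
  rw [Tfun_eq_sum S k _ (fun _ => hS)]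
  have hterm : ∀ a b : Fin k → S, 0 ≤
      (if altp k (fun i => (a i : G)) = altp k (fun i => (b i : G)) then
        (∏ i : Fin k, f (a i)) * (∏ i : Fin k, f (b i)) else 0) := by
    intro a b
    split_ifs
    · exact mul_nonneg (Finset.prod_nonneg fun _ _ => hnn _) (Finset.prod_nonneg fun _ _ => hnn _)
    · exact le_rfl
  have hfx : 0 < f x := lt_of_le_of_ne (hnn x) (Ne.symm hx)
  refine Finset.sum_pos' (fun a _ => Finset.sum_nonneg fun b _ => hterm a b)
    ⟨fun _ => ⟨x, hS x hx⟩, Finset.mem_univ _, ?_⟩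
  refine Finset.sum_pos' (fun b _ => hterm _ b) ⟨fun _ => ⟨x, hS x hx⟩, Finset.mem_univ _, ?_⟩
  simp only [if_true]
  exact mul_pos (Finset.prod_pos fun _ _ => hfx) (Finset.prod_pos fun _ _ => hfx)

end Chess

theorem stmt15 {G : Type*} [Group G] (k : ℕ) (hk : 2 ≤ k) (hke : Even k)
    (F : Fin (2 * k) → G → ℝ) (hnn : ∀ j x, 0 ≤ F j x)
    (hfin : ∀ j, (Function.support (F j)).Finite) :
    Tfun k F ^ (2 * k) ≤ ∏ j : Fin (2 * k), Tfun k (fun _ => F j) := by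
  classical
  by_cases hz : ∃ j, ∀ x, F j x = 0
  · obtain ⟨j, hj⟩ := hz
    have h0 : Tfun k F = 0 := by
      unfold Tfun
      rw [← tsum_zero]
      congr 1
      funext a
      exact Finset.prod_eq_zero (Finset.mem_univ j) (hj _)
    rw [h0, zero_pow (by omega)]
    refine Finset.prod_nonneg fun i _ => tsum_nonneg fun a => Finset.prod_nonneg fun _ _ => hnn _ _
  push Not at hz
  let S : Finset G := Finset.univ.biUnion fun j => (hfin j).toFinset
  have hS : ∀ j x, F j x ≠ 0 → x ∈ S := by
    intro j x hx
    simp only [S, Finset.mem_biUnion, Finset.mem_univ, true_and, Set.Finite.mem_toFinset]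
    exact ⟨j, hx⟩
  have hconst : ∀ j, Tfun k (fun _ => F j) =
      Chess.tr (Chess.P (Chess.el S F) true (List.replicate (2 * k) j)) := by
    intro j
    rw [Chess.Tfun_eq_tr S k hke F (fun _ => j) hS]
    simp only [List.ofFn_const, List.reverse_replicate, List.replicate_append_replicate, two_mul]
  have h := Chess.holder (Chess.el S F) k (by omega) hke
    (fun j => by
      rw [← hconst]
      obtain ⟨x, hx⟩ := hz j
      exact Chess.Tfun_pos S k (F j) (hnn j) (hS j) x hx)
    (List.ofFn (fun i : Fin k => (⟨i.val, by have := i.isLt; omega⟩ : Fin (2 * k))) ++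
        (List.ofFn (fun i : Fin k => (⟨k + i.val, by have := i.isLt; omega⟩ : Fin (2 * k)))).reverse)
    (by simp; omega)
  have e := Chess.Tfun_eq_tr S k hke F (fun j => j) hS
  rw [← e] at h
  refine h.trans (le_of_eq ?_)
  simp only [← hconst]
  rw [← (finCongr (two_mul k).symm).prod_comp, Fin.prod_univ_add, List.map_append, List.prod_append,
    List.map_reverse, List.prod_reverse, List.map_ofFn, List.map_ofFn, List.prod_ofFn,
    List.prod_ofFn]
  rfl
end

section
/- There exist absolute constants C ≥ 1 and c > 0 such that the following holds. Let G be an abelian group, A ⊆ G a finite set with |A| ≥ 2, and δ, ε ∈ (0,1] with ε ≤ δ. Then at least one of the following is true: (i) there is an integer k with 2 ≤ k ≤ C/ε such that E_k(A) ≤ |A|^{k+δ}; (ii) there exist a subset A' ⊆ A with |A'| ≥ c·|A|^{1−ε} and a finite set P ⊆ G with |P| ≥ |A|^δ / (C·(log(2|A|))^C) such that r_{A−P}(x) ≥ c·|P|·|A|^{−ε} for every x ∈ A'. -/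
open scoped BigOperators Pointwise

/-- `r_{A-P}(x)`: the number of pairs `(a, q) ∈ A × P` with `a - q = x`. -/
noncomputable def rsubAP {G : Type*} [AddCommGroup G] (A P : Finset G) (x : G) : ℕ :=
  Set.ncard {q : G × G | q.1 ∈ A ∧ q.2 ∈ P ∧ q.1 - q.2 = x}

/-- `E_k(A) = Σ_x r_{A-A}(x)^k` (the summand vanishes outside `A - A`). -/
noncomputable def Ek {G : Type*} [AddCommGroup G] [DecidableEq G]
    (k : ℕ) (A : Finset G) : ℕ :=
  ∑ x ∈ A - A, (rsubAP A A x) ^ k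

lemma rsub_eq {G : Type*} [AddCommGroup G] [DecidableEq G] (A P : Finset G) (x : G) :
    rsubAP A P x = (P.filter (fun q => x + q ∈ A)).card := by
  unfold rsubAP
  rw [← Set.ncard_coe_finset]
  symm
  apply Set.ncard_congr (fun q _ => (x + q, q))
  · intro q hq
    simp at hq
    simp [hq]
  · intro a b _ _ h
    exact (Prod.ext_iff.1 h).2
  · rintro ⟨a, q⟩ ⟨h1, h2, h3⟩
    simp only at h1 h2 h3
    subst h3
    exact ⟨q, by simpa using ⟨h2, h1⟩, by simp⟩

lemma rsub_le {G : Type*} [AddCommGroup G] [DecidableEq G] (A P : Finset G) (x : G) :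
    rsubAP A P x ≤ P.card := by
  rw [rsub_eq]; exact Finset.card_filter_le _ _

lemma rsub_swap {G : Type*} [AddCommGroup G] [DecidableEq G] (A P : Finset G) :
    ∑ x ∈ A, rsubAP A P x = ∑ q ∈ P, rsubAP A A q := by
  simp only [rsub_eq, Finset.card_filter]
  rw [Finset.sum_comm]
  simp only [add_comm]

lemma rsub_sum {G : Type*} [AddCommGroup G] [DecidableEq G] (A S : Finset G) :
    ∑ x ∈ S, rsubAP A A x ≤ A.card ^ 2 := by
  simp only [rsub_eq, Finset.card_filter]
  rw [Finset.sum_comm]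
  simp only [← Finset.card_filter]
  rw [sq, ← smul_eq_mul]
  apply Finset.sum_le_card_nsmul
  intro a _
  apply Finset.card_le_card_of_injOn (fun x => x + a)
  · intro x hx
    simp at hx
    simpa using hx.2
  · intro x _ y _ h
    simpa using h

/-- Splitting `E_k` at a threshold `D`. -/
lemma Ek_split {G : Type*} [AddCommGroup G] [DecidableEq G] (A : Finset G) (m : ℕ) (D : ℝ)
    (hD : 0 ≤ D) :
    (Ek (m + 1) A : ℝ) ≤
      ((A - A).filter (fun x => D ≤ (rsubAP A A x : ℝ))).card * (A.card : ℝ) ^ (m + 1)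
        + D ^ m * (A.card : ℝ) ^ 2 := by
  unfold Ek
  push_cast
  rw [← Finset.sum_filter_add_sum_filter_not (A - A) (fun x => D ≤ (rsubAP A A x : ℝ))]
  apply add_le_add
  · rw [← nsmul_eq_mul]
    apply Finset.sum_le_card_nsmul
    intro x _
    have := rsub_le A A x
    gcongr
  · have h2 : (∑ x ∈ (A - A).filter (fun x => ¬ D ≤ (rsubAP A A x : ℝ)), (rsubAP A A x : ℝ))
        ≤ (A.card : ℝ) ^ 2 := by
      exact_mod_cast rsub_sum A ((A - A).filter (fun x => ¬ D ≤ (rsubAP A A x : ℝ)))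
    calc _ ≤ ∑ x ∈ (A - A).filter (fun x => ¬ D ≤ (rsubAP A A x : ℝ)),
            D ^ m * (rsubAP A A x : ℝ) := by
          apply Finset.sum_le_sum
          intro x hx
          simp only [Finset.mem_filter, not_le] at hx
          rw [pow_succ]
          have := hx.2.le
          gcongr
      _ ≤ _ := by
          rw [← Finset.mul_sum]
          gcongr

theorem stmt18 :
    ∃ C c : ℝ, 1 ≤ C ∧ 0 < c ∧
      ∀ (G : Type) [AddCommGroup G] [DecidableEq G],
        ∀ A : Finset G, 2 ≤ A.card →
          ∀ δ ε : ℝ, 0 < δ → δ ≤ 1 → 0 < ε → ε ≤ δ →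
            (∃ k : ℕ, 2 ≤ k ∧ (k : ℝ) ≤ C / ε ∧
              (Ek k A : ℝ) ≤ (A.card : ℝ) ^ ((k : ℝ) + δ)) ∨
            (∃ A' : Finset G, A' ⊆ A ∧ c * (A.card : ℝ) ^ ((1 : ℝ) - ε) ≤ A'.card ∧
              ∃ P : Finset G,
                (A.card : ℝ) ^ δ / (C * Real.log (2 * A.card) ^ C) ≤ P.card ∧
                ∀ x ∈ A', c * P.card * (A.card : ℝ) ^ (-ε) ≤ (rsubAP A P x : ℝ)) := by
  refine ⟨3, 1 / 4, by norm_num, by norm_num, ?_⟩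
  intro G _ _ A hA δ ε hδ hδ1 hε hεδ
  have hN2 : (2 : ℝ) ≤ A.card := by exact_mod_cast hA
  set N : ℝ := (A.card : ℝ) with hN
  have hN0 : 0 < N := by linarith
  set m : ℕ := ⌈1 / ε⌉₊ with hm
  have hε1 : ε ≤ 1 := hεδ.trans hδ1
  have hm1 : 1 / ε ≤ m := Nat.le_ceil _
  have hm2 : (m : ℝ) < 1 / ε + 1 := Nat.ceil_lt_add_one (by positivity)
  have h1ε : 1 ≤ 1 / ε := by rw [le_div_iff₀ hε]; linarith
  have hm3 : 1 ≤ m := by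
    have : (1 : ℝ) ≤ m := h1ε.trans hm1
    exact_mod_cast this
  by_cases hE : (Ek (m + 1) A : ℝ) ≤ N ^ (((m + 1 : ℕ) : ℝ) + δ)
  · left
    refine ⟨m + 1, by omega, ?_, hE⟩
    have : 3 / ε = 3 * (1 / ε) := by ring
    push_cast
    linarith
  right
  push Not at hE
  set D : ℝ := N ^ (1 - ε) / 2 with hD
  have hD0 : 0 < D := by positivity
  have hsplit := Ek_split A m D hD0.le
  set P := (A - A).filter (fun x => D ≤ (rsubAP A A x : ℝ)) with hP
  rw [← hN] at hsplit
  have hDm : D ^ m * N ^ 2 ≤ N ^ (m + 1) * N ^ δ / 2 := by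
    have e1 : D ^ m = N ^ ((1 - ε) * m) / 2 ^ m := by
      rw [hD, div_pow, Real.rpow_mul_natCast hN0.le]
    have e2 : N ^ ((1 - ε) * m) * N ^ 2 ≤ N ^ (m + 1) * N ^ δ := by
      rw [← Real.rpow_natCast N 2, ← Real.rpow_natCast N (m + 1), ← Real.rpow_add hN0,
        ← Real.rpow_add hN0]
      apply Real.rpow_le_rpow_of_exponent_le (by linarith)
      rw [div_le_iff₀ hε] at hm1
      push_cast
      nlinarith
    have e3 : (2 : ℝ) ≤ 2 ^ m := by
      calc (2 : ℝ) = 2 ^ 1 := by norm_num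
        _ ≤ 2 ^ m := pow_le_pow_right₀ (by norm_num) hm3
    rw [e1, div_mul_eq_mul_div]
    gcongr
  rw [Real.rpow_add hN0, Real.rpow_natCast] at hE
  have hNm : 0 < N ^ (m + 1) := by positivity
  have hPc : N ^ δ / 2 < P.card := by
    by_contra hcon
    push Not at hcon
    have := mul_le_mul_of_nonneg_right hcon hNm.le
    linarith
  have hP0 : (0 : ℝ) < P.card := lt_of_le_of_lt (by positivity) hPc
  have hsum : (P.card : ℝ) * D ≤ ∑ x ∈ A, (rsubAP A P x : ℝ) := by
    have h := rsub_swap A P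
    have h' : ∑ x ∈ A, (rsubAP A P x : ℝ) = ∑ q ∈ P, (rsubAP A A q : ℝ) := by exact_mod_cast h
    rw [h', ← nsmul_eq_mul]
    apply Finset.card_nsmul_le_sum
    intro x hx
    exact (Finset.mem_filter.1 hx).2
  have hND : N * N ^ (-ε) = N ^ (1 - ε) := by
    rw [sub_eq_add_neg, Real.rpow_add hN0, Real.rpow_one]
  refine ⟨A.filter (fun x => 1 / 4 * P.card * N ^ (-ε) ≤ (rsubAP A P x : ℝ)),
    Finset.filter_subset _ _, ?_, P, ?_, ?_⟩
  · set T := A.filter (fun x => 1 / 4 * P.card * N ^ (-ε) ≤ (rsubAP A P x : ℝ)) with hT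
    have hup : ∑ x ∈ A, (rsubAP A P x : ℝ) ≤
        T.card * (P.card : ℝ) + N * (1 / 4 * P.card * N ^ (-ε)) := by
      rw [← Finset.sum_filter_add_sum_filter_not A
        (fun x => 1 / 4 * P.card * N ^ (-ε) ≤ (rsubAP A P x : ℝ))]
      apply add_le_add
      · rw [← nsmul_eq_mul]
        apply Finset.sum_le_card_nsmul
        intro x _
        exact_mod_cast rsub_le A P x
      · refine (Finset.sum_le_card_nsmul _ _ (1 / 4 * P.card * N ^ (-ε)) ?_).trans ?_
        · intro x hx
          exact (not_le.1 (Finset.mem_filter.1 hx).2).le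
        · rw [nsmul_eq_mul]
          have : (A.filter (fun x => ¬ 1 / 4 * P.card * N ^ (-ε) ≤ (rsubAP A P x : ℝ))).card
            ≤ A.card := Finset.card_filter_le _ _
          rw [hN]
          gcongr
    have h3 : N * (1 / 4 * P.card * N ^ (-ε)) = P.card * (1 / 4 * N ^ (1 - ε)) := by
      rw [← hND]; ring
    have h4 : (P.card : ℝ) * (1 / 4 * N ^ (1 - ε)) ≤ P.card * T.card := by
      rw [h3] at hup
      have : (P.card : ℝ) * D = 2 * (P.card * (1 / 4 * N ^ (1 - ε))) := by rw [hD]; ring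
      linarith [mul_comm (P.card : ℝ) T.card]
    exact le_of_mul_le_mul_left h4 hP0
  · refine le_trans ?_ hPc.le
    have hlog : 1 ≤ Real.log (2 * N) := by
      rw [Real.le_log_iff_exp_le (by positivity)]
      linarith [Real.exp_one_lt_d9]
    have := Real.one_le_rpow hlog (by norm_num : (0 : ℝ) ≤ 3)
    apply div_le_div_of_nonneg_left (by positivity) (by norm_num)
    linarith
  · intro x hx
    exact (Finset.mem_filter.1 hx).2
end

section
/- There exist absolute constants C1, C2 > 0 with the following property. Let G be a finite directed multigraph on a vertex set V with |V| ≥ 2 in which every vertex has out-degree k and in-degree k (k ≥ 1), and which is strongly connected. Let P be the simple random walk on G (from a vertex v, move along a uniformly random outgoing edge of v), and let h(G) = min{ e(S, S^c) / (k·|S|) : S ⊆ V, 1 ≤ |S| ≤ |V|/2 }, where e(S, S^c) is the number of edges from S to V∖S. Consider the lazy chain (X_n) with transition 'stay put with probability 1/2, otherwise take one step of P', started from an arbitrary fixed X_0 ∈ V. Then for every c > 0 and every integer n ≥ c·h(G)^{−2}·log|V|, one has max_{A ⊆ V} | P(X_n ∈ A) − |A|/|V| | ≤ C1·e^{−C2·c}.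 -/
open scoped BigOperators

/-- The distribution of the Markov chain after `n` steps: the `n`-fold bind of
`step` applied to the point mass at `x0`. -/
noncomputable def walkDist {S : Type*} (step : S → PMF S) (x0 : S) : ℕ → PMF S :=
  fun n => (fun μ : PMF S => μ.bind step)^[n] (PMF.pure x0)

lemma aux_coarea {V : Type} [Fintype V] [DecidableEq V] (P : V → V → ℝ) (h : ℝ)
    (hP : ∀ x y, 0 ≤ P x y)
    (hh : ∀ S : Finset V, S.Nonempty → 2 * S.card ≤ Fintype.card V →
      h * S.card ≤ ∑ x ∈ S, ∑ y ∈ Sᶜ, P x y) :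
    ∀ (n : ℕ) (S : Finset V) (F : V → ℝ), S.card = n → 2 * S.card ≤ Fintype.card V →
      (∀ x ∈ S, 0 < F x) → (∀ x, x ∉ S → F x = 0) →
      h * ∑ x, F x ≤ ∑ x, ∑ y, P x y * max (F x - F y) 0 := by
  intro n
  induction n using Nat.strong_induction_on with
  | _ n ih =>
    intro S F hn hS hpos hzero
    rcases S.eq_empty_or_nonempty with rfl | hne
    · have : ∀ x, F x = 0 := fun x => hzero x (by simp)
      simp [this]
    · obtain ⟨a, haS, ha⟩ := S.exists_min_image F hne
      set m := F a with hm
      have hmpos : 0 < m := hpos a haS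
      let F' : V → ℝ := fun x => if x ∈ S then F x - m else 0
      let S' : Finset V := S.filter (fun x => 0 < F' x)
      have hsub : S' ⊂ S := by
        refine Finset.filter_ssubset.2 ⟨a, haS, ?_⟩
        simp [F', haS, hm]
      have hlt : S'.card < S.card := Finset.card_lt_card hsub
      have hF'0 : ∀ x, 0 ≤ F' x := by
        intro x
        by_cases hx : x ∈ S
        · simp only [F', hx, if_true]; linarith [ha x hx]
        · simp [F', hx]
      have key := ih S'.card (hn ▸ hlt) S' F' rfl (by omega)
        (fun x hx => (Finset.mem_filter.1 hx).2)
        (by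
          intro x hx
          by_cases hxS : x ∈ S
          · have : ¬ 0 < F' x := fun h0 => hx (Finset.mem_filter.2 ⟨hxS, h0⟩)
            linarith [hF'0 x]
          · simp [F', hxS])
      have hdec : ∀ x, F x = F' x + m * (if x ∈ S then 1 else 0) := by
        intro x
        by_cases hxS : x ∈ S
        · simp [F', hxS]
        · simp [F', hxS, hzero x hxS]
      have hsum : ∑ x, F x = ∑ x, F' x + m * S.card := by
        simp_rw [hdec]
        rw [Finset.sum_add_distrib, ← Finset.mul_sum]
        simp
      have hpt : ∀ x y, P x y * max (F x - F y) 0 =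
          P x y * max (F' x - F' y) 0 + m * (if x ∈ S then (if y ∈ Sᶜ then P x y else 0) else 0) := by
        intro x y
        by_cases hxS : x ∈ S <;> by_cases hyS : y ∈ S
        · simp [F', hxS, hyS]
        · have h1 := ha x hxS
          have h2 := hpos x hxS
          have h3 := hzero y hyS
          simp only [F', hxS, hyS, Finset.mem_compl, if_true, if_false, not_false_eq_true, h3]
          rw [max_eq_left (by linarith), max_eq_left (by linarith)]
          ring
        · have h1 := ha y hyS
          have h2 := hpos y hyS
          have h3 := hzero x hxS
          simp only [F', hxS, hyS, if_true, if_false, h3]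
          rw [max_eq_right (by linarith), max_eq_right (by linarith)]
          ring
        · simp [F', hxS, hyS, hzero x hxS, hzero y hyS]
      have hsum2 : ∑ x, ∑ y, P x y * max (F x - F y) 0 =
          ∑ x, ∑ y, P x y * max (F' x - F' y) 0 + m * ∑ x ∈ S, ∑ y ∈ Sᶜ, P x y := by
        simp_rw [hpt, Finset.sum_add_distrib, ← Finset.mul_sum]
        congr 2
        rw [← Finset.sum_filter_add_sum_filter_not Finset.univ (· ∈ S)]
        have e2 : ∑ x ∈ Finset.univ.filter (fun x => ¬ x ∈ S),
            (∑ y, if x ∈ S then (if y ∈ Sᶜ then P x y else 0) else 0) = 0 := by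
          apply Finset.sum_eq_zero
          intro x hx
          simp [(Finset.mem_filter.1 hx).2]
        rw [e2, add_zero]
        have e3 : Finset.univ.filter (fun x => x ∈ S) = S := by ext; simp
        rw [e3]
        apply Finset.sum_congr rfl
        intro x hx
        simp only [hx, if_true]
        rw [← Finset.sum_filter]
        congr 1
        ext; simp
      rw [hsum, hsum2, mul_add]
      have := mul_le_mul_of_nonneg_left (hh S hne hS) hmpos.le
      nlinarith

lemma aux_cheeger_pos {V : Type} [Fintype V] [DecidableEq V] (P : V → V → ℝ) (h : ℝ) (h0 : 0 < h)
    (hP : ∀ x y, 0 ≤ P x y) (hrow : ∀ x, ∑ y, P x y = 1) (hcol : ∀ y, ∑ x, P x y = 1)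
    (hh : ∀ S : Finset V, S.Nonempty → 2 * S.card ≤ Fintype.card V →
      h * S.card ≤ ∑ x ∈ S, ∑ y ∈ Sᶜ, P x y)
    (f : V → ℝ) (hf : ∀ x, 0 ≤ f x)
    (hS : 2 * (Finset.univ.filter (fun x => 0 < f x)).card ≤ Fintype.card V) :
    h ^ 2 * ∑ x, f x ^ 2 ≤ ∑ x, ∑ y, P x y * (f x - f y) ^ 2 := by
  have co := aux_coarea P h hP hh _ (Finset.univ.filter (fun x => 0 < f x)) (fun x => f x ^ 2) rfl hS
    (by intro x hx; have := (Finset.mem_filter.1 hx).2; positivity)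
    (by
      intro x hx
      have : ¬ 0 < f x := fun h0 => hx (Finset.mem_filter.2 ⟨Finset.mem_univ _, h0⟩)
      have : f x = 0 := le_antisymm (not_lt.1 this) (hf x)
      simp [this])
  set T := ∑ x, f x ^ 2 with hT
  set D := ∑ x, ∑ y, P x y * (f x - f y) ^ 2 with hD
  have hTsum1 : ∑ x, ∑ y, P x y * f x ^ 2 = T := by
    simp_rw [← Finset.sum_mul, hrow, one_mul]; rfl
  have hTsum2 : ∑ x, ∑ y, P x y * f y ^ 2 = T := by
    rw [Finset.sum_comm]
    simp_rw [← Finset.sum_mul, hcol, one_mul]; rfl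
  -- antisymmetric part vanishes
  have habs : 2 * ∑ x, ∑ y, P x y * max (f x ^ 2 - f y ^ 2) 0 =
      ∑ x, ∑ y, P x y * |f x ^ 2 - f y ^ 2| := by
    have : ∀ x y, P x y * |f x ^ 2 - f y ^ 2| =
        2 * (P x y * max (f x ^ 2 - f y ^ 2) 0) - (P x y * f x ^ 2 - P x y * f y ^ 2) := by
      intro x y
      rcases le_total 0 (f x ^ 2 - f y ^ 2) with hc | hc
      · rw [abs_of_nonneg hc, max_eq_left hc]; ring
      · rw [abs_of_nonpos hc, max_eq_right hc]; ring
    simp_rw [this, Finset.sum_sub_distrib, ← Finset.mul_sum]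
    rw [hTsum1, hTsum2]; ring
  have hmain : 2 * h * T ≤ ∑ x, ∑ y, P x y * |f x ^ 2 - f y ^ 2| := by
    rw [← habs]; nlinarith
  have hpt : ∀ x y, P x y * |f x ^ 2 - f y ^ 2| ≤
      (1 / h) * (P x y * (f x - f y) ^ 2) + (h / 2) * (P x y * f x ^ 2 + P x y * f y ^ 2) := by
    intro x y
    have e : |f x ^ 2 - f y ^ 2| = |f x - f y| * (f x + f y) := by
      rw [sq_sub_sq, abs_mul, abs_of_nonneg (add_nonneg (hf x) (hf y)), mul_comm]
    have i : |f x - f y| * (f x + f y) ≤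
        (1 / h) * (f x - f y) ^ 2 + (h / 2) * (f x ^ 2 + f y ^ 2) := by
      have hs : (f x - f y) ^ 2 = |f x - f y| ^ 2 := (sq_abs _).symm
      rw [hs]
      set d := |f x - f y|
      have : 0 ≤ (1 / h) * (d - h / 2 * (f x + f y)) ^ 2 := by positivity
      have e2 : (1 / h) * (d - h / 2 * (f x + f y)) ^ 2 =
        (1 / h) * d ^ 2 - d * (f x + f y) + h / 4 * (f x + f y) ^ 2 := by
        field_simp; ring
      nlinarith [sq_nonneg (f x - f y)]
    rw [e]
    nlinarith [mul_le_mul_of_nonneg_left i (hP x y)]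
  have hle : ∑ x, ∑ y, P x y * |f x ^ 2 - f y ^ 2| ≤ (1 / h) * D + (h / 2) * (T + T) := by
    calc _ ≤ ∑ x, ∑ y, ((1 / h) * (P x y * (f x - f y) ^ 2)
            + (h / 2) * (P x y * f x ^ 2 + P x y * f y ^ 2)) :=
          Finset.sum_le_sum fun x _ => Finset.sum_le_sum fun y _ => hpt x y
      _ = _ := by
          simp_rw [Finset.sum_add_distrib, ← Finset.mul_sum, Finset.sum_add_distrib]
          rw [hTsum1, hTsum2]
  have h3 : h * T ≤ (1 / h) * D := by linarith
  have h4 := mul_le_mul_of_nonneg_left h3 h0.le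
  have h5 : h * (1 / h * D) = D := by field_simp
  nlinarith

lemma aux_median {V : Type} [Fintype V] [DecidableEq V] [Nonempty V] (g : V → ℝ) :
    ∃ m : ℝ, 2 * (Finset.univ.filter (fun x => m < g x)).card ≤ Fintype.card V ∧
      2 * (Finset.univ.filter (fun x => g x < m)).card ≤ Fintype.card V := by
  let W := Finset.univ.filter
    (fun v : V => 2 * (Finset.univ.filter (fun x => g v < g x)).card ≤ Fintype.card V)
  have hW : W.Nonempty := by
    obtain ⟨a, -, ha⟩ := (Finset.univ : Finset V).exists_max_image g Finset.univ_nonempty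
    refine ⟨a, Finset.mem_filter.2 ⟨Finset.mem_univ _, ?_⟩⟩
    have : Finset.univ.filter (fun x => g a < g x) = ∅ := by
      apply Finset.filter_eq_empty_iff.2
      intro x hx; exact not_lt.2 (ha x hx)
    simp [this]
  obtain ⟨a, haW, ha⟩ := W.exists_min_image g hW
  refine ⟨g a, (Finset.mem_filter.1 haW).2, ?_⟩
  by_contra hcon
  push Not at hcon
  have hne : (Finset.univ.filter (fun x => g x < g a)).Nonempty := by
    rw [← Finset.card_pos]; omega
  obtain ⟨b, hb, hbmax⟩ := Finset.exists_max_image _ g hne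
  have hba : g b < g a := (Finset.mem_filter.1 hb).2
  have hbW : b ∈ W := by
    refine Finset.mem_filter.2 ⟨Finset.mem_univ _, ?_⟩
    have hsub : Finset.univ.filter (fun x => g b < g x) ⊆
        Finset.univ.filter (fun x => ¬ g x < g a) := by
      intro x hx
      simp only [Finset.mem_filter, Finset.mem_univ, true_and] at hx ⊢
      intro hxa
      have := hbmax x (by simp [hxa])
      linarith
    have h1 := Finset.card_le_card hsub
    have h2 := Finset.card_filter_add_card_filter_not (s := (Finset.univ : Finset V))
      (fun x => g x < g a)
    rw [Finset.card_univ] at h2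
    omega
  have := ha b hbW
  linarith

lemma aux_cheeger {V : Type} [Fintype V] [DecidableEq V] [Nonempty V]
    (P : V → V → ℝ) (h : ℝ) (h0 : 0 < h)
    (hP : ∀ x y, 0 ≤ P x y) (hrow : ∀ x, ∑ y, P x y = 1) (hcol : ∀ y, ∑ x, P x y = 1)
    (hh : ∀ S : Finset V, S.Nonempty → 2 * S.card ≤ Fintype.card V →
      h * S.card ≤ ∑ x ∈ S, ∑ y ∈ Sᶜ, P x y)
    (g : V → ℝ) (hg : ∑ x, g x = 0) :
    h ^ 2 * ∑ x, g x ^ 2 ≤ ∑ x, ∑ y, P x y * (g x - g y) ^ 2 := by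
  obtain ⟨m, hm1, hm2⟩ := aux_median g
  have c1 := aux_cheeger_pos P h h0 hP hrow hcol hh (fun x => max (g x - m) 0)
    (fun x => le_max_right _ _) (by simpa [lt_max_iff] using hm1)
  have c2 := aux_cheeger_pos P h h0 hP hrow hcol hh (fun x => max (m - g x) 0)
    (fun x => le_max_right _ _) (by simpa [lt_max_iff] using hm2)
  have e1 : ∑ x, g x ^ 2 ≤ ∑ x, max (g x - m) 0 ^ 2 + ∑ x, max (m - g x) 0 ^ 2 := by
    rw [← Finset.sum_add_distrib]
    have : ∑ x, (g x ^ 2 - 2 * m * g x) ≤ ∑ x, (max (g x - m) 0 ^ 2 + max (m - g x) 0 ^ 2) := by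
      apply Finset.sum_le_sum
      intro x _
      rcases le_total (g x) m with hc | hc
      · rw [max_eq_right (by linarith), max_eq_left (by linarith)]; nlinarith [sq_nonneg m]
      · rw [max_eq_left (by linarith), max_eq_right (by linarith)]; nlinarith [sq_nonneg m]
    rw [Finset.sum_sub_distrib, ← Finset.mul_sum, hg] at this
    linarith
  have e2 : ∑ x, ∑ y, P x y * (max (g x - m) 0 - max (g y - m) 0) ^ 2 +
      ∑ x, ∑ y, P x y * (max (m - g x) 0 - max (m - g y) 0) ^ 2 ≤
      ∑ x, ∑ y, P x y * (g x - g y) ^ 2 := by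
    simp_rw [← Finset.sum_add_distrib]
    refine Finset.sum_le_sum fun x _ => Finset.sum_le_sum fun y _ => ?_
    rw [← mul_add]
    apply mul_le_mul_of_nonneg_left _ (hP x y)
    rcases le_total (g x) m with hc | hc <;> rcases le_total (g y) m with hd | hd
    · rw [max_eq_right (by linarith), max_eq_right (by linarith), max_eq_left (by linarith),
        max_eq_left (by linarith)]
      nlinarith
    · rw [max_eq_right (by linarith), max_eq_left (by linarith), max_eq_left (by linarith),
        max_eq_right (by linarith)]
      nlinarith [mul_nonneg (sub_nonneg.2 hc) (sub_nonneg.2 hd)]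
    · rw [max_eq_left (by linarith), max_eq_right (by linarith), max_eq_right (by linarith),
        max_eq_left (by linarith)]
      nlinarith [mul_nonneg (sub_nonneg.2 hc) (sub_nonneg.2 hd)]
    · rw [max_eq_left (by linarith), max_eq_left (by linarith), max_eq_right (by linarith),
        max_eq_right (by linarith)]
      nlinarith
  have := mul_le_mul_of_nonneg_left e1 (sq_nonneg h)
  nlinarith

lemma aux_contract {V : Type} [Fintype V] [DecidableEq V] [Nonempty V]
    (P : V → V → ℝ) (h : ℝ) (h0 : 0 < h)
    (hP : ∀ x y, 0 ≤ P x y) (hrow : ∀ x, ∑ y, P x y = 1) (hcol : ∀ y, ∑ x, P x y = 1)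
    (hh : ∀ S : Finset V, S.Nonempty → 2 * S.card ≤ Fintype.card V →
      h * S.card ≤ ∑ x ∈ S, ∑ y ∈ Sᶜ, P x y)
    (g : V → ℝ) (hg : ∑ x, g x = 0) :
    ∑ y, (1 / 2 * g y + 1 / 2 * ∑ x, g x * P x y) ^ 2 ≤ (1 - h ^ 2 / 4) * ∑ x, g x ^ 2 := by
  have hc := aux_cheeger P h h0 hP hrow hcol hh g hg
  set T := ∑ x, g x ^ 2 with hT
  have hT1 : ∑ x, ∑ y, P x y * g x ^ 2 = T := by
    simp_rw [← Finset.sum_mul, hrow, one_mul]; rfl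
  have hT2 : ∑ x, ∑ y, P x y * g y ^ 2 = T := by
    rw [Finset.sum_comm]
    simp_rw [← Finset.sum_mul, hcol, one_mul]; rfl
  have hD : ∑ x, ∑ y, P x y * (g x - g y) ^ 2 = 2 * T - 2 * ∑ y, g y * ∑ x, g x * P x y := by
    have : ∀ x y, P x y * (g x - g y) ^ 2 =
        P x y * g x ^ 2 + P x y * g y ^ 2 - 2 * (g y * (g x * P x y)) := by intros; ring
    simp_rw [this, Finset.sum_sub_distrib, Finset.sum_add_distrib, ← Finset.mul_sum]
    rw [hT1, hT2]
    simp_rw [Finset.mul_sum]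
    rw [Finset.sum_comm]
    simp_rw [← Finset.mul_sum]
    ring
  have hJ : ∑ y, (∑ x, g x * P x y) ^ 2 ≤ T := by
    rw [← hT1, Finset.sum_comm]
    refine Finset.sum_le_sum fun y _ => ?_
    have j : 0 ≤ ∑ x, P x y * (g x - ∑ z, g z * P z y) ^ 2 :=
      Finset.sum_nonneg fun x _ => mul_nonneg (hP x y) (sq_nonneg _)
    set s := ∑ z, g z * P z y with hs
    have : ∀ x, P x y * (g x - s) ^ 2 =
        P x y * g x ^ 2 - 2 * s * (g x * P x y) + P x y * s ^ 2 := by intros; ring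
    simp_rw [this, Finset.sum_add_distrib, Finset.sum_sub_distrib, ← Finset.mul_sum,
      ← Finset.sum_mul, hcol, ← hs] at j
    nlinarith
  have hexp : ∑ y, (1 / 2 * g y + 1 / 2 * ∑ x, g x * P x y) ^ 2 =
      1 / 4 * T + 1 / 2 * ∑ y, g y * ∑ x, g x * P x y + 1 / 4 * ∑ y, (∑ x, g x * P x y) ^ 2 := by
    rw [hT, Finset.mul_sum, Finset.mul_sum, Finset.mul_sum, ← Finset.sum_add_distrib,
      ← Finset.sum_add_distrib]
    refine Finset.sum_congr rfl fun y _ => ?_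
    ring
  rw [hexp]
  nlinarith

lemma aux_cut_pos {V : Type} [Fintype V] [DecidableEq V] (E : V × V → ℕ)
    (hconn : ∀ u v : V, Relation.ReflTransGen (fun a b => 0 < E (a, b)) u v)
    (S : Finset V) (u v : V) (hu : u ∈ S) (hv : v ∉ S) :
    0 < ∑ v ∈ S, ∑ u ∈ Sᶜ, (E (v, u) : ℝ) := by
  have : ∃ a ∈ S, ∃ b ∉ S, 0 < E (a, b) := by
    by_contra hcon
    push Not at hcon
    apply hv
    have := hconn u v
    induction this with
    | refl => exact hu
    | @tail b c _ hbc ih =>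
      by_contra hc
      by_cases hb : b ∈ S
      · have := hcon b hb c hc
        omega
      · exact hb (ih hb)
  obtain ⟨a, ha, b, hb, hab⟩ := this
  refine Finset.sum_pos' (fun x _ => Finset.sum_nonneg fun y _ => by positivity) ⟨a, ha, ?_⟩
  exact Finset.sum_pos' (fun y _ => by positivity) ⟨b, by simpa using hb, by exact_mod_cast hab⟩

theorem stmt19 :
    ∃ C1 C2 : ℝ, 0 < C1 ∧ 0 < C2 ∧
      ∀ (V : Type) [Fintype V] [DecidableEq V] [Nonempty V], 2 ≤ Fintype.card V →
        ∀ E : V × V → ℕ, ∀ k : ℕ, 1 ≤ k →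
          (∀ v : V, ∑ u : V, E (v, u) = k) →
          (∀ v : V, ∑ u : V, E (u, v) = k) →
          (∀ u v : V, Relation.ReflTransGen (fun a b => 0 < E (a, b)) u v) →
          ∀ step : V → PMF V, (∀ v u : V, step v u = (E (v, u) : ENNReal) / k) →
            ∀ hG : ℝ,
              hG = sInf {x : ℝ | ∃ S : Finset V, S.Nonempty ∧
                  2 * S.card ≤ Fintype.card V ∧
                  x = (∑ v ∈ S, ∑ u ∈ Sᶜ, (E (v, u) : ℝ)) / ((k : ℝ) * S.card)} →
              ∀ lazystep : V → PMF V,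
                lazystep = (fun v => (PMF.uniformOfFintype Bool).bind
                  (fun b => if b then PMF.pure v else step v)) →
                ∀ X0 : V, ∀ c : ℝ, 0 < c →
                  ∀ n : ℕ, c / hG ^ 2 * Real.log (Fintype.card V) ≤ n →
                    ∀ A : Finset V,
                      |(∑ x ∈ A, (walkDist lazystep X0 n x).toReal)
                          - (A.card : ℝ) / (Fintype.card V : ℝ)|
                        ≤ C1 * Real.exp (-C2 * c) := by
  refine ⟨Real.exp 1, 1 / 32, Real.exp_pos _, by norm_num, ?_⟩
  intro V _ _ _ hV E k hk hout hin hconn step hstep hG hGdef lazystep hlazy X0 c hc n hn A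
  set N : ℝ := (Fintype.card V : ℝ) with hN
  have hN2 : (2 : ℝ) ≤ N := by rw [hN]; exact_mod_cast hV
  have hkpos : (0 : ℝ) < k := by exact_mod_cast hk
  set H := {x : ℝ | ∃ S : Finset V, S.Nonempty ∧ 2 * S.card ≤ Fintype.card V ∧
                  x = (∑ v ∈ S, ∑ u ∈ Sᶜ, (E (v, u) : ℝ)) / ((k : ℝ) * S.card)} with hH
  have hHfin : H.Finite := by
    refine (Set.finite_range (fun S : Finset V =>
      (∑ v ∈ S, ∑ u ∈ Sᶜ, (E (v, u) : ℝ)) / ((k : ℝ) * S.card))).subset ?_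
    rintro x ⟨S, -, -, rfl⟩
    exact ⟨S, rfl⟩
  have hHne : H.Nonempty := ⟨_, {X0}, by simp, by simpa using hV, rfl⟩
  have hGpos : 0 < hG := by
    have := hHne.csInf_mem hHfin
    rw [← hGdef] at this
    obtain ⟨S, hSne, hS, he⟩ := this
    rw [he]
    have hcp : 0 < S.card := hSne.card_pos
    obtain ⟨u, hu⟩ := hSne
    have : ∃ v, v ∉ S := by
      by_contra hcon
      push Not at hcon
      have : S = Finset.univ := Finset.eq_univ_iff_forall.2 hcon
      rw [this, Finset.card_univ] at hS
      omega
    obtain ⟨v, hv⟩ := this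
    have := aux_cut_pos E hconn S u v hu hv
    positivity
  let P : V → V → ℝ := fun x y => (E (x, y) : ℝ) / k
  have hP : ∀ x y, 0 ≤ P x y := fun x y => by positivity
  have hrow : ∀ x, ∑ y, P x y = 1 := by
    intro x
    simp only [P]
    rw [← Finset.sum_div, div_eq_one_iff_eq hkpos.ne']
    exact_mod_cast hout x
  have hcol : ∀ y, ∑ x, P x y = 1 := by
    intro y
    simp only [P]
    rw [← Finset.sum_div, div_eq_one_iff_eq hkpos.ne']
    exact_mod_cast hin y
  have hh : ∀ S : Finset V, S.Nonempty → 2 * S.card ≤ Fintype.card V →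
      hG * S.card ≤ ∑ x ∈ S, ∑ y ∈ Sᶜ, P x y := by
    intro S hSne hS
    have hle : hG ≤ (∑ v ∈ S, ∑ u ∈ Sᶜ, (E (v, u) : ℝ)) / ((k : ℝ) * S.card) := by
      rw [hGdef]
      exact csInf_le hHfin.bddBelow ⟨S, hSne, hS, rfl⟩
    have hcp : (0 : ℝ) < S.card := by exact_mod_cast hSne.card_pos
    simp only [P]
    simp_rw [← Finset.sum_div]
    rw [le_div_iff₀ (by positivity)] at hle
    rw [le_div_iff₀ hkpos]
    linarith
  let q : ℕ → V → ℝ := fun j x => (walkDist lazystep X0 j x).toReal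
  have hq0 : ∀ j x, 0 ≤ q j x := fun j x => ENNReal.toReal_nonneg
  have hqsum : ∀ j, ∑ x, q j x = 1 := by
    intro j
    simp only [q]
    rw [← ENNReal.toReal_sum (fun x _ => PMF.apply_ne_top _ x), ← tsum_fintype (L := .unconditional V), PMF.tsum_coe]
    simp
  have hlz : ∀ x y, (lazystep x y).toReal = 1 / 2 * (if y = x then 1 else 0) + 1 / 2 * P x y := by
    intro x y
    rw [hlazy]
    simp only [PMF.bind_apply, tsum_fintype, Fintype.sum_bool, PMF.uniformOfFintype_apply,
      Fintype.card_bool, if_true, Bool.false_eq_true, if_false, PMF.pure_apply, hstep]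
    rw [ENNReal.toReal_add]
    · simp only [ENNReal.toReal_mul, ENNReal.toReal_div, P]
      split_ifs <;> simp
    · split_ifs <;> simp
    · rw [← hstep]
      exact ENNReal.mul_ne_top (by simp) (PMF.apply_ne_top _ _)
  have hqs : ∀ j y, q (j + 1) y = 1 / 2 * q j y + 1 / 2 * ∑ x, q j x * P x y := by
    intro j y
    have : walkDist lazystep X0 (j + 1) = (walkDist lazystep X0 j).bind lazystep := by
      unfold walkDist
      rw [Function.iterate_succ_apply']
    simp only [q]
    rw [this, PMF.bind_apply, tsum_fintype, ENNReal.toReal_sum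
      (fun x _ => ENNReal.mul_ne_top (PMF.apply_ne_top _ _) (PMF.apply_ne_top _ _))]
    simp only [ENNReal.toReal_mul, hlz, mul_add, Finset.sum_add_distrib]
    congr 1
    · simp [mul_comm]
    · rw [Finset.mul_sum]
      refine Finset.sum_congr rfl fun x _ => ?_
      ring
  let g : ℕ → V → ℝ := fun j x => q j x - 1 / N
  have hcardN : ∑ _x : V, (1 / N) = 1 := by
    rw [Finset.sum_const, Finset.card_univ, nsmul_eq_mul, ← hN]
    field_simp
  have hgsum : ∀ j, ∑ x, g j x = 0 := by
    intro j
    simp only [g]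
    rw [Finset.sum_sub_distrib, hqsum, hcardN, sub_self]
  have hgs : ∀ j y, g (j + 1) y = 1 / 2 * g j y + 1 / 2 * ∑ x, g j x * P x y := by
    intro j y
    simp only [g]
    rw [hqs]
    simp_rw [sub_mul, Finset.sum_sub_distrib, ← Finset.mul_sum, hcol]
    ring
  have hq1 : ∀ j x, q j x ≤ 1 := by
    intro j x
    rw [← hqsum j]
    exact Finset.single_le_sum (fun y _ => hq0 j y) (Finset.mem_univ x)
  have hg0 : ∑ x, g 0 x ^ 2 ≤ 1 := by
    have hNp : (0 : ℝ) < N := by linarith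
    have h1N : 0 < 1 / N := by positivity
    have : ∀ x, g 0 x ^ 2 ≤ q 0 x - 2 / N * q 0 x + 1 / N * (1 / N) := by
      intro x
      simp only [g]
      have := hq0 0 x
      have := hq1 0 x
      have e : (q 0 x - 1 / N) ^ 2 = q 0 x ^ 2 - 2 / N * q 0 x + 1 / N * (1 / N) := by ring
      rw [e]
      nlinarith
    refine (Finset.sum_le_sum fun x _ => this x).trans ?_
    rw [Finset.sum_add_distrib, Finset.sum_sub_distrib, ← Finset.mul_sum, ← Finset.mul_sum,
      hqsum, hcardN]
    have : 2 / N = 2 * (1 / N) := by ring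
    rw [this]
    linarith
  have hdecay : ∀ j : ℕ, ∑ x, g j x ^ 2 ≤ Real.exp (-(hG ^ 2 / 4) * j) := by
    intro j
    induction j with
    | zero => simpa using hg0
    | succ j ih =>
      simp_rw [hgs]
      refine (aux_contract P hG hGpos hP hrow hcol hh (g j) (hgsum j)).trans ?_
      have h1 : 1 - hG ^ 2 / 4 ≤ Real.exp (-(hG ^ 2 / 4)) := by
        linarith [Real.add_one_le_exp (-(hG ^ 2 / 4))]
      calc _ ≤ Real.exp (-(hG ^ 2 / 4)) * ∑ x, g j x ^ 2 :=
            mul_le_mul_of_nonneg_right h1 (Finset.sum_nonneg fun _ _ => sq_nonneg _)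
        _ ≤ Real.exp (-(hG ^ 2 / 4)) * Real.exp (-(hG ^ 2 / 4) * j) :=
            mul_le_mul_of_nonneg_left ih (Real.exp_pos _).le
        _ = _ := by
            rw [← Real.exp_add]; congr 1; push_cast; ring
  have hgoal : (∑ x ∈ A, (walkDist lazystep X0 n x).toReal) - (A.card : ℝ) / N
      = ∑ x ∈ A, g n x := by
    simp only [g, q]
    rw [Finset.sum_sub_distrib, Finset.sum_const, nsmul_eq_mul]
    ring
  have hAN : (A.card : ℝ) ≤ N := by
    rw [hN]; exact_mod_cast Finset.card_le_univ A
  rw [← Real.exp_add]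
  by_cases hc8 : c < 8
  · have h1 : (1 : ℝ) ≤ Real.exp (1 + -(1 / 32) * c) := Real.one_le_exp (by linarith)
    refine le_trans ?_ h1
    have a1 : 0 ≤ ∑ x ∈ A, q n x := Finset.sum_nonneg fun x _ => hq0 n x
    have a2 : ∑ x ∈ A, q n x ≤ 1 := by
      rw [← hqsum n]
      exact Finset.sum_le_sum_of_subset_of_nonneg (Finset.subset_univ _) fun x _ _ => hq0 n x
    have a3 : 0 ≤ (A.card : ℝ) / N := by positivity
    have a4 : (A.card : ℝ) / N ≤ 1 := div_le_one_of_le₀ hAN (by linarith)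
    rw [abs_le]
    constructor
    · change -1 ≤ (∑ x ∈ A, q n x) - _
      linarith
    · change (∑ x ∈ A, q n x) - _ ≤ 1
      linarith
  · push Not at hc8
    rw [hgoal]
    apply abs_le_of_sq_le_sq _ (Real.exp_pos _).le
    have b1 : (∑ x ∈ A, g n x) ^ 2 ≤ N * ∑ x, g n x ^ 2 := by
      calc _ ≤ (A.card : ℝ) * ∑ x ∈ A, g n x ^ 2 := sq_sum_le_card_mul_sum_sq
        _ ≤ N * ∑ x, g n x ^ 2 := by
          refine mul_le_mul hAN ?_ (Finset.sum_nonneg fun _ _ => sq_nonneg _) (by linarith)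
          exact Finset.sum_le_sum_of_subset_of_nonneg (Finset.subset_univ _)
            fun x _ _ => sq_nonneg _
    have b2 : N = Real.exp (Real.log N) := (Real.exp_log (by linarith)).symm
    have b3 : N * ∑ x, g n x ^ 2 ≤ Real.exp (Real.log N + -(hG ^ 2 / 4) * n) := by
      rw [Real.exp_add, ← b2]
      exact mul_le_mul_of_nonneg_left (hdecay n) (by linarith)
    refine (b1.trans b3).trans ?_
    rw [← Real.exp_nat_mul]
    apply Real.exp_le_exp.2
    have hlog : 1 / 2 ≤ Real.log N := by
      have := Real.log_le_log (by norm_num) hN2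
      linarith [Real.log_two_gt_d9]
    have b4 : c * Real.log N ≤ hG ^ 2 * n := by
      have := mul_le_mul_of_nonneg_left hn (sq_nonneg hG)
      have e : hG ^ 2 * (c / hG ^ 2 * Real.log N) = c * Real.log N := by
        field_simp
      linarith
    push_cast
    nlinarith [mul_nonneg (sub_nonneg.2 hc8) (sub_nonneg.2 hlog)]
end
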